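/- arXiv:1203.5245 — 8 statements merged into one kernel-verified Lean document; each statement's English description precedes it below -/
import Mathlib

section
/- Let (E,𝓔) be a measurable space, Ω = E^ℕ with the product σ-field 𝓕, X_i the i-th coordinate projection, and for a probability measure P on Ω write P₁ = P∘X₁⁻¹ for its first marginal and m̂_n(x) = (1/n)∑_{i=1}^n δ_{x_i} for the empirical measure of x ∈ Ω. Let 𝓟 be a class of probability measures on (Ω,𝓕) each having identical marginals, 𝓜 a set of probability measures on E containing all marginals P₁ (P ∈ 𝓟) and all empirical measures, d a metric on 𝓜, (𝕋,d_𝕋) a complete separable metric space with Borel σ-field, and T : 𝓜 → 𝕋 such that T̂_n(x) := T(m̂_n(x)) is measurable for every n and x ↦ d(m̂_n(x),P₁) is measurable for every P ∈ 𝓟. Assume 𝓟 admits the UGC property w.r.t. d, i.e. for every δ > 0, sup_{Q∈𝓟} Q[d(m̂_n,Q₁) ≥ δ] → 0 as n → ∞. Fix P ∈ 𝓟 and assume T is continuous at P₁ w.r.t. (d,d_𝕋). Then the sequence (T̂_n) is qualitatively 𝓟-marginally robust at P w.r.t. (d, d'_Proh): for every ε > 0 there exist δ > 0 and n₀ ∈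 ℕ such that for every Q ∈ 𝓟 with d(P₁,Q₁) ≤ δ and every n ≥ n₀ one has d'_Proh(P∘T̂_n⁻¹, Q∘T̂_n⁻¹) ≤ ε, where d'_Proh denotes the Prohorov metric on probability measures on 𝕋. -/
/-!
Continuity at `P₁` makes the plug-in estimator close to `T P₁` as soon as the empirical measure is
`d`-close to `P₁`. By the UGC property and the triangle inequality, the latter holds with high
probability uniformly over all laws whose marginal is close to `P₁`. Hence for large `n` the laws of
`T̂ₙ` under `P` and under any such `Q` put almost all their mass on the same small ball around
`T P₁`, and the Prohorov distance of two such laws is small.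
-/

open MeasureTheory Filter Topology

/-- The empirical probability measure of the first `n` coordinates of `x`. -/
noncomputable def empMeas {E : Type*} [MeasurableSpace E] (n : ℕ) (x : ℕ → E) :
    Measure E :=
  (n : ENNReal)⁻¹ • ∑ i ∈ Finset.range n, Measure.dirac (x i)

/-- The (one-sided) Prohorov distance between two measures on a metric space:
`inf {ε > 0 : μ[A] ≤ ν[A^ε] + ε for all Borel A}`, where `A^ε` is the closed
`ε`-hull of `A`. -/
noncomputable def prohorovDist {T : Type*} [MetricSpace T] [MeasurableSpace T]
    (μ ν : Measure T) : ℝ :=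
  sInf {ε : ℝ | 0 < ε ∧ ∀ A : Set T, MeasurableSet A →
    (μ A).toReal ≤ (ν (Metric.cthickening ε A)).toReal + ε}

section Prohorov

variable {T : Type*} [MetricSpace T] [MeasurableSpace T]

theorem prohorovDist_le {μ ν : Measure T} {ε : ℝ} (hε : 0 < ε)
    (h : ∀ A, MeasurableSet A → μ.real A ≤ ν.real (Metric.cthickening ε A) + ε) :
    prohorovDist μ ν ≤ ε :=
  csInf_le ⟨0, fun _ hη => hη.1.le⟩ ⟨hε, h⟩

theorem prohorovDist_le_of_measureReal_compl_le {μ ν : Measure T} [IsProbabilityMeasure μ]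
    [IsProbabilityMeasure ν] {S : Set T} {ε : ℝ} (hε : 0 < ε)
    (hS : ∀ x ∈ S, ∀ y ∈ S, dist x y ≤ ε) (hμ : μ.real Sᶜ ≤ ε) (hν : ν.real Sᶜ ≤ ε) :
    prohorovDist μ ν ≤ ε := by
  refine prohorovDist_le hε fun A _ => ?_
  by_cases hAS : Disjoint A S
  · calc μ.real A ≤ μ.real Sᶜ := measureReal_mono hAS.subset_compl_right
      _ ≤ ε := hμ
      _ ≤ ν.real (Metric.cthickening ε A) + ε := le_add_of_nonneg_left measureReal_nonneg
  · obtain ⟨a, haA, haS⟩ := Set.not_disjoint_iff.1 hAS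
    have hsub : S ⊆ Metric.cthickening ε A := fun y hy =>
      Metric.mem_cthickening_of_dist_le y a ε A haA (hS y hy a haS)
    calc μ.real A ≤ 1 := measureReal_le_one
      _ = ν.real (S ∪ Sᶜ) := by rw [Set.union_compl_self, probReal_univ]
      _ ≤ ν.real S + ν.real Sᶜ := measureReal_union_le S Sᶜ
      _ ≤ ν.real (Metric.cthickening ε A) + ε := add_le_add (measureReal_mono hsub) hν

theorem measureReal_map_compl_closedBall_le [OpensMeasurableSpace T] {Ω : Type*}
    [MeasurableSpace Ω] {μ : Measure Ω} {f : Ω → T} (hf : AEMeasurable f μ) {c : T} {r ε : ℝ}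
    (hε : 0 ≤ ε) (h : μ {x | r < dist (f x) c} ≤ ENNReal.ofReal ε) :
    (μ.map f).real (Metric.closedBall c r)ᶜ ≤ ε := by
  refine ENNReal.toReal_le_of_le_ofReal hε ?_
  have hpre : f ⁻¹' (Metric.closedBall c r)ᶜ = {x | r < dist (f x) c} := by ext; simp
  rwa [Measure.map_apply_of_aemeasurable hf Metric.isClosed_closedBall.measurableSet.compl, hpre]

theorem prohorovDist_map_le_of_measure_lt_dist_le [OpensMeasurableSpace T] {Ω Ω' : Type*}
    [MeasurableSpace Ω] [MeasurableSpace Ω'] {μ : Measure Ω} {ν : Measure Ω'}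
    [IsProbabilityMeasure μ] [IsProbabilityMeasure ν] {f : Ω → T} {g : Ω' → T}
    (hf : AEMeasurable f μ) (hg : AEMeasurable g ν) (c : T) {ε : ℝ} (hε : 0 < ε)
    (hμ : μ {x | ε / 2 < dist (f x) c} ≤ ENNReal.ofReal ε)
    (hν : ν {x | ε / 2 < dist (g x) c} ≤ ENNReal.ofReal ε) :
    prohorovDist (μ.map f) (ν.map g) ≤ ε := by
  have := Measure.isProbabilityMeasure_map hf
  have := Measure.isProbabilityMeasure_map hg
  refine prohorovDist_le_of_measureReal_compl_le (S := Metric.closedBall c (ε / 2)) hε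
    (fun x hx y hy => ?_) (measureReal_map_compl_closedBall_le hf hε.le hμ)
    (measureReal_map_compl_closedBall_le hg hε.le hν)
  calc dist x y ≤ dist x c + dist y c := dist_triangle_right x y c
    _ ≤ ε / 2 + ε / 2 := add_le_add hx hy
    _ = ε := add_halves ε

end Prohorov

section UniformConsistency

variable {Ω M ι : Type*} [MeasurableSpace Ω]

/-- `d` is a pseudometric on the set `s`. It is an unbundled function on all of `M` because the
metrics on sets of probability measures under consideration vary, and because estimators may leave
`s` for finitely many sample sizes. Nonnegativity follows from the three fields. -/
structure IsPseudoMetricOn (d : M → M → ℝ) (s : Set M) : Prop where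
  self : ∀ p ∈ s, d p p = 0
  symm : ∀ p ∈ s, ∀ q ∈ s, d p q = d q p
  triangle : ∀ p ∈ s, ∀ q ∈ s, ∀ r ∈ s, d p r ≤ d p q + d q r

/-- Uniform weak consistency over the class `Ps` of the estimators `m n` for the parameter `θ`, with
respect to `d`. For `m n` the empirical measure and `θ` the first marginal this is the UGC property
of `Ps`. On a non-measurable deviation event, `Q` is the outer measure. -/
def IsUniformlyConsistent (Ps : Set (Measure Ω)) (d : M → M → ℝ) (m : ι → Ω → M)
    (θ : Measure Ω → M) (l : Filter ι) : Prop :=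
  ∀ δ : ℝ, 0 < δ → Tendsto (fun n => ⨆ Q ∈ Ps, Q {x | δ ≤ d (m n x) (θ Q)}) l (𝓝 0)

variable {Ps : Set (Measure Ω)} {d : M → M → ℝ} {s : Set M} {m : ι → Ω → M}
  {θ : Measure Ω → M} {l : Filter ι}

theorem IsUniformlyConsistent.eventually_measure_le (h : IsUniformlyConsistent Ps d m θ l)
    {δ : ℝ} (hδ : 0 < δ) {η : ENNReal} (hη : 0 < η) :
    ∀ᶠ n in l, ∀ Q ∈ Ps, Q {x | δ ≤ d (m n x) (θ Q)} ≤ η := by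
  simpa only [iSup₂_le_iff] using ENNReal.tendsto_nhds_zero.1 (h δ hδ) η hη

theorem IsUniformlyConsistent.exists_eventually_measure_lt_dist_le
    (h : IsUniformlyConsistent Ps d m θ l) (hd : IsPseudoMetricOn d s)
    (hθ : ∀ Q ∈ Ps, θ Q ∈ s) (hm : ∀ᶠ n in l, ∀ x, m n x ∈ s)
    {T : Type*} [PseudoMetricSpace T] {f : M → T} {p : M} (hp : p ∈ s)
    (hf : ∀ ε : ℝ, 0 < ε → ∃ δ : ℝ, 0 < δ ∧ ∀ q ∈ s, d p q ≤ δ → dist (f p) (f q) ≤ ε)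
    {ε : ℝ} (hε : 0 < ε) {η : ENNReal} (hη : 0 < η) :
    ∃ δ : ℝ, 0 < δ ∧ ∀ᶠ n in l, ∀ Q ∈ Ps, d p (θ Q) ≤ δ →
      Q {x | ε < dist (f (m n x)) (f p)} ≤ η := by
  obtain ⟨δ, hδ, hfδ⟩ := hf ε hε
  refine ⟨δ / 2, half_pos hδ, ?_⟩
  filter_upwards [hm, h.eventually_measure_le (half_pos hδ) hη] with n hmn hn Q hQ hpQ
  refine (measure_mono fun x hx => ?_).trans (hn Q hQ)
  by_contra hfar
  have hlt : d (m n x) (θ Q) < δ / 2 := not_le.1 hfar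
  have hclose : d p (m n x) ≤ δ := calc
    d p (m n x) ≤ d p (θ Q) + d (θ Q) (m n x) := hd.triangle p hp _ (hθ Q hQ) _ (hmn x)
    _ = d p (θ Q) + d (m n x) (θ Q) := by rw [hd.symm _ (hθ Q hQ) _ (hmn x)]
    _ ≤ δ / 2 + δ / 2 := add_le_add hpQ hlt.le
    _ = δ := add_halves δ
  exact hx.not_ge (dist_comm (f p) _ ▸ hfδ _ (hmn x) hclose)

end UniformConsistency

theorem hampel_type_theorem_general
    {Ω M T : Type*} [MeasurableSpace Ω] [MetricSpace T] [MeasurableSpace T]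
    [OpensMeasurableSpace T] {Ps : Set (Measure Ω)} (hprob : ∀ Q ∈ Ps, IsProbabilityMeasure Q)
    {d : M → M → ℝ} {s : Set M} (hd : IsPseudoMetricOn d s)
    {θ : Measure Ω → M} (hθ : ∀ Q ∈ Ps, θ Q ∈ s)
    {m : ℕ → Ω → M} (hm : ∀ᶠ n in atTop, ∀ x, m n x ∈ s)
    (hcons : IsUniformlyConsistent Ps d m θ atTop)
    {f : M → T} (hmeas : ∀ Q ∈ Ps, ∀ n, AEMeasurable (fun x => f (m n x)) Q)
    {P : Measure Ω} (hP : P ∈ Ps)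
    (hf : ∀ ε : ℝ, 0 < ε → ∃ δ : ℝ, 0 < δ ∧ ∀ q ∈ s,
      d (θ P) q ≤ δ → dist (f (θ P)) (f q) ≤ ε) :
    ∀ ε : ℝ, 0 < ε → ∃ δ : ℝ, 0 < δ ∧ ∃ n₀ : ℕ, ∀ Q ∈ Ps, d (θ P) (θ Q) ≤ δ →
      ∀ n ≥ n₀, prohorovDist (P.map fun x => f (m n x)) (Q.map fun x => f (m n x)) ≤ ε := by
  intro ε hε
  obtain ⟨δ, hδ, hconc⟩ := hcons.exists_eventually_measure_lt_dist_le hd hθ hm (hθ P hP) hf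
    (half_pos hε) (ENNReal.ofReal_pos.2 hε)
  obtain ⟨n₀, hn₀⟩ := eventually_atTop.1 hconc
  refine ⟨δ, hδ, n₀, fun Q hQ hPQ n hn => ?_⟩
  have := hprob P hP
  have := hprob Q hQ
  have hPP : d (θ P) (θ P) ≤ δ := (hd.self _ (hθ P hP)).trans_le hδ.le
  exact prohorovDist_map_le_of_measure_lt_dist_le (hmeas P hP n) (hmeas Q hQ n) (f (θ P)) hε
    (hn₀ n hn P hP hPP) (hn₀ n hn Q hQ hPQ)

/-- **Hampel-type theorem** (Theorem 2.4): if the class `Ps` admits the UGC property w.r.t. `d`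
and the statistical functional `T` is continuous at the marginal `P₁` w.r.t. `(d, d_𝕋)`, then
the sequence of plug-in estimators `T̂ₙ` is qualitatively `Ps`-marginally robust at `P` w.r.t.
`(d, d'_Proh)`. -/
theorem hampel_type_theorem
    {E : Type*} [MeasurableSpace E]
    {T : Type*} [MetricSpace T] [CompleteSpace T] [TopologicalSpace.SeparableSpace T]
    [MeasurableSpace T] [BorelSpace T]
    -- the class Ps of admissible laws on Ω = E^ℕ, with identical marginals
    (Ps : Set (Measure (ℕ → E)))
    (hprob : ∀ P ∈ Ps, IsProbabilityMeasure P)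
    (hident : ∀ P ∈ Ps, ∀ i : ℕ, P.map (fun x => x i) = P.map (fun x => x 0))
    -- the class Ms of probability measures on E, containing marginals and empirical measures
    (Ms : Set (Measure E))
    (hmarg : ∀ P ∈ Ps, P.map (fun x => x 0) ∈ Ms)
    (hemp : ∀ n : ℕ, 1 ≤ n → ∀ x : ℕ → E, empMeas n x ∈ Ms)
    -- d is a metric on Ms
    (d : Measure E → Measure E → ℝ)
    (hd_nonneg : ∀ μ ∈ Ms, ∀ ν ∈ Ms, 0 ≤ d μ ν)
    (hd_symm : ∀ μ ∈ Ms, ∀ ν ∈ Ms, d μ ν = d ν μ)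
    (hd_triangle : ∀ μ ∈ Ms, ∀ ν ∈ Ms, ∀ ρ ∈ Ms, d μ ρ ≤ d μ ν + d ν ρ)
    (hd_eq : ∀ μ ∈ Ms, ∀ ν ∈ Ms, (d μ ν = 0 ↔ μ = ν))
    -- the statistical functional and the required measurability
    (Tf : Measure E → T)
    (hTmeas : ∀ n : ℕ, Measurable fun x : ℕ → E => Tf (empMeas n x))
    (hdmeas : ∀ P ∈ Ps, ∀ n : ℕ,
      Measurable fun x : ℕ → E => d (empMeas n x) (P.map (fun y => y 0)))
    -- the UGC property of Ps w.r.t. d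
    (hUGC : ∀ δ : ℝ, 0 < δ →
      Tendsto (fun n : ℕ => ⨆ Q ∈ Ps,
          Q {x : ℕ → E | δ ≤ d (empMeas n x) (Measure.map (fun y => y 0) Q)})
        atTop (nhds 0))
    -- a fixed P ∈ Ps at which T is continuous w.r.t. (d, d_𝕋)
    (P : Measure (ℕ → E)) (hP : P ∈ Ps)
    (hcont : ∀ ε : ℝ, 0 < ε → ∃ δ : ℝ, 0 < δ ∧ ∀ ν ∈ Ms,
      d (P.map (fun y => y 0)) ν ≤ δ → dist (Tf (P.map (fun y => y 0))) (Tf ν) ≤ ε) :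
    -- qualitative Ps-marginal robustness at P w.r.t. (d, d'_Proh)
    ∀ ε : ℝ, 0 < ε → ∃ δ : ℝ, 0 < δ ∧ ∃ n₀ : ℕ, ∀ Q ∈ Ps,
      d (P.map (fun y => y 0)) (Q.map (fun y => y 0)) ≤ δ →
      ∀ n ≥ n₀, prohorovDist
          (P.map (fun x : ℕ → E => Tf (empMeas n x)))
          (Q.map (fun x : ℕ → E => Tf (empMeas n x))) ≤ ε := by
  exact hampel_type_theorem_general hprob
    ⟨fun μ hμ => (hd_eq μ hμ μ hμ).2 rfl, hd_symm, hd_triangle⟩ hmarg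
    (eventually_atTop.2 ⟨1, hemp⟩) hUGC (fun _ _ n => (hTmeas n).aemeasurable) hP hcont
end

section
/- Let (E,𝓔) be a measurable space, Ω = E^ℕ with the product σ-field 𝓕, X_i the i-th coordinate projection, P₁ = P∘X₁⁻¹ the first marginal of a probability measure P on Ω, and m̂_n(x) = (1/n)∑_{i=1}^n δ_{x_i}. Let 𝓟 be a class of probability measures on (Ω,𝓕) each with identical marginals, 𝓟₁ = {P₁ : P ∈ 𝓟}, 𝓜 ⊇ 𝓟₁ a set of probability measures on E containing all empirical measures, d a metric on 𝓜, (𝕋,d_𝕋) a complete separable metric space, T : 𝓜 → 𝕋 with T̂_n(x) := T(m̂_n(x)) measurable. Fix P ∈ 𝓟 and assume (T̂_n) is weakly consistent w.r.t. d_𝕋 at every Q ∈ 𝓟 for which Q₁ lies in some d-neighborhood of P₁, i.e. T̂_n converges in Q-probability to T(Q₁) w.r.t. d_𝕋 for all such Q. If (T̂_n) is qualitatively 𝓟-marginally robust at P w.r.t. (d, d'_Proh) — i.e. for every ε > 0 there exist δ > 0 and n₀ with d'_Proh(P∘T̂_n⁻¹, Q∘T̂_n⁻¹) ≤ ε for all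 Q ∈ 𝓟 with d(P₁,Q₁) ≤ δ and all n ≥ n₀ — then T is 𝓟₁-continuous at P₁ w.r.t. (d,d_𝕋): for every ε > 0 there is δ > 0 such that d_𝕋(T(P₁),T(ν)) ≤ ε for every ν ∈ 𝓟₁ with d(P₁,ν) ≤ δ. -/
open MeasureTheory Filter Topology

/-!
A sequence converging in probability to `a` has laws concentrating near `a`, so the laws of two
sequences with limits `a` and `b` can only be Prohorov-close, at a level below `1`, if `a` and `b`
are close. Near `P` consistency supplies the limits `T P₁` and `T Q₁`, and robustness keeps the laws
close.
-/

section Prohorov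

variable {T : Type*} [MetricSpace T] [MeasurableSpace T]

lemma measureReal_le_thickening_add_of_prohorovDist_lt {μ ν : Measure T} [IsFiniteMeasure μ]
    [IsFiniteMeasure ν] {r : ℝ} (h : prohorovDist μ ν < r) {A : Set T} (hA : MeasurableSet A) :
    μ.real A ≤ ν.real (Metric.thickening r A) + r := by
  -- A real `sInf` over the empty set would be `0`, so an admissible `ε` has to be exhibited.
  have admissible_nonempty : {ε : ℝ | 0 < ε ∧ ∀ A : Set T, MeasurableSet A →
      μ.real A ≤ ν.real (Metric.cthickening ε A) + ε}.Nonempty :=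
    ⟨μ.real Set.univ + 1, by positivity, fun B _ => by
      linarith [measureReal_mono (μ := μ) (Set.subset_univ B),
        measureReal_nonneg (μ := ν) (s := Metric.cthickening (μ.real Set.univ + 1) B)]⟩
  obtain ⟨ε, ⟨hε, hμν⟩, hεr⟩ := exists_lt_of_csInf_lt admissible_nonempty h
  calc μ.real A ≤ ν.real (Metric.cthickening ε A) + ε := hμν A hA
    _ ≤ ν.real (Metric.thickening r A) + r := by
      gcongr
      · exact measure_ne_top ν _
      · exact Metric.cthickening_subset_thickening' (hε.trans hεr) hεr A

variable [OpensMeasurableSpace T]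

lemma dist_lt_of_prohorovDist_lt {μ ν : Measure T} [IsFiniteMeasure μ] [IsFiniteMeasure ν]
    {a b : T} {r s t : ℝ} (h : prohorovDist μ ν < s)
    (hmass : ν.real (Metric.ball b t)ᶜ + s < μ.real (Metric.ball a r)) :
    dist a b < r + s + t := by
  have not_subset : ¬ Metric.thickening s (Metric.ball a r) ⊆ (Metric.ball b t)ᶜ := fun hsub => by
    linarith [measureReal_mono (μ := ν) hsub,
      measureReal_le_thickening_add_of_prohorovDist_lt h (A := Metric.ball a r) measurableSet_ball]
  obtain ⟨y, hya, hyb⟩ := Set.not_subset.1 not_subset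
  obtain ⟨z, hza, hyz⟩ := Metric.mem_thickening_iff.1 hya
  calc dist a b ≤ dist a z + dist z y + dist y b := dist_triangle4 a z y b
    _ < r + s + t := by
      gcongr
      · exact Metric.mem_ball'.1 hza
      · exact dist_comm y z ▸ hyz
      · exact not_not.1 hyb

variable {ι Ω Ω' : Type*} [MeasurableSpace Ω] [MeasurableSpace Ω'] {l : Filter ι}

lemma tendsto_map_real_compl_ball_of_tendstoInMeasure {P : Measure Ω} [IsFiniteMeasure P]
    {f : ι → Ω → T} {a : T} (hf : ∀ i, AEMeasurable (f i) P)
    (h : TendstoInMeasure P f l fun _ => a) {r : ℝ} (hr : 0 < r) :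
    Tendsto (fun i => (P.map (f i)).real (Metric.ball a r)ᶜ) l (𝓝 0) := by
  convert tendstoInMeasure_iff_measureReal_dist.1 h r hr using 2 with i
  rw [map_measureReal_apply_of_aemeasurable (hf i) measurableSet_ball.compl]
  congr 1
  ext x
  simp

lemma dist_le_of_frequently_prohorovDist_le {P : Measure Ω} [IsProbabilityMeasure P]
    {Q : Measure Ω'} [IsFiniteMeasure Q] {f : ι → Ω → T} {g : ι → Ω' → T} {a b : T} {ε : ℝ}
    (hf : ∀ i, AEMeasurable (f i) P) (hg : ∀ i, AEMeasurable (g i) Q)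
    (hfa : TendstoInMeasure P f l fun _ => a) (hgb : TendstoInMeasure Q g l fun _ => b)
    (hε : ε < 1) (hfg : ∃ᶠ i in l, prohorovDist (P.map (f i)) (Q.map (g i)) ≤ ε) :
    dist a b ≤ ε := by
  by_contra! hab
  obtain ⟨s, hεs, hs⟩ := exists_between (lt_min hε hab)
  obtain ⟨hs1, hsab⟩ := lt_min_iff.1 hs
  obtain ⟨r, hr_pos, hr⟩ : ∃ r > 0, dist a b = r + s + r :=
    ⟨(dist a b - s) / 2, by linarith, by ring⟩
  have hmass : 0 < (1 - s) / 2 := by linarith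
  have hP := (tendsto_map_real_compl_ball_of_tendstoInMeasure hf hfa hr_pos).eventually_lt_const
    hmass
  have hQ := (tendsto_map_real_compl_ball_of_tendstoInMeasure hg hgb hr_pos).eventually_lt_const
    hmass
  obtain ⟨i, hi, hPi, hQi⟩ := (hfg.and_eventually (hP.and hQ)).exists
  have : IsProbabilityMeasure (P.map (f i)) := Measure.isProbabilityMeasure_map (hf i)
  rw [probReal_compl_eq_one_sub measurableSet_ball] at hPi
  exact (dist_lt_of_prohorovDist_lt (hi.trans_lt hεs) (by linarith)).ne hr

end Prohorov

theorem hampel_converse_general {ι Ω T : Type*} [MeasurableSpace Ω] [MetricSpace T]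
    [MeasurableSpace T] [OpensMeasurableSpace T] {l : Filter ι}
    {Ps : Set (Measure Ω)} (hprob : ∀ Q ∈ Ps, IsProbabilityMeasure Q)
    {S : ι → Ω → T} (hS : ∀ Q ∈ Ps, ∀ i, AEMeasurable (S i) Q)
    {θ : Measure Ω → T} {d : Measure Ω → Measure Ω → ℝ} {P : Measure Ω}
    (hP : P ∈ Ps) (hd : d P P = 0)
    (hconsist : ∃ r > 0, ∀ Q ∈ Ps, d P Q < r → TendstoInMeasure Q S l fun _ => θ Q)
    (hrobust : ∀ ε > 0, ∃ δ > 0, ∀ Q ∈ Ps, d P Q ≤ δ →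
      ∃ᶠ i in l, prohorovDist (P.map (S i)) (Q.map (S i)) ≤ ε)
    {ε : ℝ} (hε : 0 < ε) :
    ∃ δ > 0, ∀ Q ∈ Ps, d P Q ≤ δ → dist (θ P) (θ Q) ≤ ε := by
  obtain ⟨r, hr, hconsist⟩ := hconsist
  obtain ⟨δ, hδ, hclose⟩ := hrobust (min ε (1 / 2)) (by positivity)
  refine ⟨min δ (r / 2), by positivity, fun Q hQ hPQ => ?_⟩
  obtain ⟨hPQδ, hPQr⟩ := le_min_iff.1 hPQ
  have := hprob P hP
  have := hprob Q hQ
  have hθ : dist (θ P) (θ Q) ≤ min ε (1 / 2) :=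
    dist_le_of_frequently_prohorovDist_le (hS P hP) (hS Q hQ)
      (hconsist P hP (hd.trans_lt hr)) (hconsist Q hQ (by linarith))
      (min_lt_of_right_lt one_half_lt_one) (hclose Q hQ hPQδ)
  exact hθ.trans (min_le_left _ _)

/-- **Converse of Hampel's theorem** (Remark 2.5): if the plug-in estimators are weakly
consistent at every `Q ∈ 𝓟` whose marginal lies in some `d`-neighborhood of `P₁`, then
qualitative `𝓟`-marginal robustness at `P` implies `𝓟₁`-continuity of `T` at `P₁`. -/
theorem hampel_converse
    {E : Type*} [MeasurableSpace E]
    {T : Type*} [MetricSpace T] [CompleteSpace T] [TopologicalSpace.SeparableSpace T]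
    [MeasurableSpace T] [BorelSpace T]
    (Ps : Set (Measure (ℕ → E)))
    (hprob : ∀ P ∈ Ps, IsProbabilityMeasure P)
    (hident : ∀ P ∈ Ps, ∀ i : ℕ, P.map (fun x => x i) = P.map (fun x => x 0))
    (Ms : Set (Measure E))
    (hmarg : ∀ P ∈ Ps, P.map (fun x => x 0) ∈ Ms)
    (hemp : ∀ n : ℕ, 1 ≤ n → ∀ x : ℕ → E, empMeas n x ∈ Ms)
    (d : Measure E → Measure E → ℝ)
    (hd_nonneg : ∀ μ ∈ Ms, ∀ ν ∈ Ms, 0 ≤ d μ ν)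
    (hd_symm : ∀ μ ∈ Ms, ∀ ν ∈ Ms, d μ ν = d ν μ)
    (hd_triangle : ∀ μ ∈ Ms, ∀ ν ∈ Ms, ∀ ρ ∈ Ms, d μ ρ ≤ d μ ν + d ν ρ)
    (hd_eq : ∀ μ ∈ Ms, ∀ ν ∈ Ms, (d μ ν = 0 ↔ μ = ν))
    (Tf : Measure E → T)
    (hTmeas : ∀ n : ℕ, Measurable fun x : ℕ → E => Tf (empMeas n x))
    (P : Measure (ℕ → E)) (hP : P ∈ Ps)
    -- weak consistency w.r.t. d_𝕋 at every Q ∈ 𝓟 with Q₁ in some d-neighborhood of P₁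
    (hconsist : ∃ r : ℝ, 0 < r ∧ ∀ Q ∈ Ps,
      d (P.map (fun y => y 0)) (Q.map (fun y => y 0)) < r →
      ∀ ε : ℝ, 0 < ε →
        Tendsto (fun n : ℕ =>
            Q {x : ℕ → E | ε ≤ dist (Tf (empMeas n x)) (Tf (Measure.map (fun y => y 0) Q))})
          atTop (nhds 0))
    -- qualitative 𝓟-marginal robustness at P w.r.t. (d, d'_Proh)
    (hrobust : ∀ ε : ℝ, 0 < ε → ∃ δ : ℝ, 0 < δ ∧ ∃ n₀ : ℕ, ∀ Q ∈ Ps,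
      d (P.map (fun y => y 0)) (Q.map (fun y => y 0)) ≤ δ →
      ∀ n ≥ n₀, prohorovDist
          (P.map (fun x : ℕ → E => Tf (empMeas n x)))
          (Q.map (fun x : ℕ → E => Tf (empMeas n x))) ≤ ε) :
    -- 𝓟₁-continuity of T at P₁ w.r.t. (d, d_𝕋)
    ∀ ε : ℝ, 0 < ε → ∃ δ : ℝ, 0 < δ ∧ ∀ ν : Measure E, (∃ Q ∈ Ps, ν = Q.map (fun y => y 0)) →
      d (P.map (fun y => y 0)) ν ≤ δ → dist (Tf (P.map (fun y => y 0))) (Tf ν) ≤ ε := by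
  intro ε hε
  obtain ⟨δ, hδ, hcont⟩ := hampel_converse_general hprob (fun _ _ n => (hTmeas n).aemeasurable)
    (d := fun P Q => d (P.map (fun y => y 0)) (Q.map (fun y => y 0)))
    (θ := fun Q => Tf (Q.map (fun y => y 0))) hP ((hd_eq _ (hmarg P hP) _ (hmarg P hP)).2 rfl)
    (by simpa only [tendstoInMeasure_iff_dist] using hconsist)
    (fun η hη => (hrobust η hη).imp fun _ ⟨hδ, n₀, hclose⟩ => ⟨hδ, fun Q hQ hPQ =>
      (eventually_atTop.2 ⟨n₀, hclose Q hQ hPQ⟩).frequently⟩) hε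
  exact ⟨δ, hδ, fun _ ⟨Q, hQ, hν⟩ => hν ▸ hcont Q hQ⟩
end

section
/- Let Ω = ℝ^ℕ with the product σ-field 𝓕, X_i the i-th coordinate projection, and for a probability measure P on Ω let P₁ = P∘X₁⁻¹ and m̂_n = (1/n)∑_{i=1}^n δ_{X_i}. Let 𝓟 be a class of probability measures on (Ω,𝓕) such that (a) under every P ∈ 𝓟 all marginals coincide, and (c) lim_{n→∞} sup_{P∈𝓟} α_P(n) = 0, where α_P(n) is the n-th strong mixing coefficient of the coordinate process under P. Then for every δ > 0, lim_{n→∞} sup_{P∈𝓟} P[ d_Lévy(m̂_n, P₁) ≥ δ ] = 0, where d_Lévy is the Lévy metric. -/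
open MeasureTheory Filter Topology

/-- The `n`-th strong mixing (α-mixing) coefficient of a sequence `ξ` under `P`. -/
noncomputable def mixingCoef {Ω E : Type*} [MeasurableSpace Ω] [MeasurableSpace E]
    (P : Measure Ω) (ξ : ℕ → Ω → E) (n : ℕ) : ℝ :=
  sSup {r : ℝ | ∃ k : ℕ, ∃ A B : Set Ω,
    MeasurableSet[⨆ i ∈ Set.Iic k, MeasurableSpace.comap (ξ i) inferInstance] A ∧
    MeasurableSet[⨆ i ∈ Set.Ici (k + n), MeasurableSpace.comap (ξ i) inferInstance] B ∧
    r = |(P (A ∩ B)).toReal - (P A).toReal * (P B).toReal|}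

/-- The distribution function of a measure on `ℝ`. -/
noncomputable def cdfR (μ : Measure ℝ) (y : ℝ) : ℝ := (μ (Set.Iic y)).toReal

/-- The Lévy distance between two probability measures on `ℝ`:
`inf {ε > 0 : F_μ(x−ε) − ε ≤ F_ν(x) ≤ F_μ(x+ε) + ε for all x}`. -/
noncomputable def dLevy (μ ν : Measure ℝ) : ℝ :=
  sInf {ε : ℝ | 0 < ε ∧ ∀ x : ℝ,
    cdfR μ (x - ε) - ε ≤ cdfR ν x ∧ cdfR ν x ≤ cdfR μ (x + ε) + ε}

/-!
Covariances of the events `ξ i ∈ A` are at most `1` near the diagonal and at most the mixing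
coefficient away from it, so the variance of the empirical frequency of `A` is small, uniformly in
`A` and in the law; Chebyshev's inequality then gives a uniform weak law for single events. To
pass to all half-lines at once, note that if `F` is the distribution function of `X` then
`P (F X < q) ≤ q ≤ P (F (X-) < q)`; the sets `{F (·-) < k / m}` and `{F < (k + 1) / m}` therefore
bracket the half-lines with gap `1 / m`. Their number depends on `m` only, not on the law, so a
union bound controls the Kolmogorov distance, which dominates the Lévy distance.
-/

open ProbabilityTheory

section Indicator

variable {Ω : Type*} [MeasurableSpace Ω] {P : Measure Ω}

lemma memLp_indicator_one [IsFiniteMeasure P] {p : ENNReal} {A : Set Ω} (hA : MeasurableSet A) :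
    MemLp (A.indicator (1 : Ω → ℝ)) p P :=
  memLp_indicator_const p hA 1 (Or.inr (measure_ne_top P A))

variable [IsProbabilityMeasure P]

lemma covariance_indicator_one {A B : Set Ω} (hA : MeasurableSet A) (hB : MeasurableSet B) :
    cov[A.indicator (1 : Ω → ℝ), B.indicator 1; P] = P.real (A ∩ B) - P.real A * P.real B := by
  rw [covariance_eq_sub (memLp_indicator_one hA) (memLp_indicator_one hB),
    ← Set.inter_indicator_one, integral_indicator_one (hA.inter hB), integral_indicator_one hA,
    integral_indicator_one hB]

lemma abs_measureReal_inter_sub_mul_le_one (A B : Set Ω) :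
    |P.real (A ∩ B) - P.real A * P.real B| ≤ 1 :=
  abs_sub_le_of_nonneg_of_le measureReal_nonneg measureReal_le_one
    (mul_nonneg measureReal_nonneg measureReal_nonneg)
    (mul_le_one₀ measureReal_le_one measureReal_nonneg measureReal_le_one)

lemma covariance_indicator_one_le_one {A B : Set Ω} (hA : MeasurableSet A)
    (hB : MeasurableSet B) : cov[A.indicator (1 : Ω → ℝ), B.indicator 1; P] ≤ 1 := by
  rw [covariance_indicator_one hA hB]
  exact (le_abs_self _).trans (abs_measureReal_inter_sub_mul_le_one A B)

end Indicator

section Mixing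

lemma measurableSet_iSup_comap_preimage {Ω E : Type*} [MeasurableSpace E] {ξ : ℕ → Ω → E}
    {I : Set ℕ} {i : ℕ} (hi : i ∈ I) {A : Set E} (hA : MeasurableSet A) :
    MeasurableSet[⨆ j ∈ I, MeasurableSpace.comap (ξ j) inferInstance] (ξ i ⁻¹' A) :=
  le_iSup₂ (f := fun j (_ : j ∈ I) => MeasurableSpace.comap (ξ j) inferInstance) i hi _
    ⟨A, hA, rfl⟩

variable {Ω E : Type*} [MeasurableSpace Ω] [MeasurableSpace E] {P : Measure Ω} {ξ : ℕ → Ω → E}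

lemma mixingCoef_nonneg (P : Measure Ω) (ξ : ℕ → Ω → E) (m : ℕ) : 0 ≤ mixingCoef P ξ m := by
  refine Real.sSup_nonneg ?_
  rintro _ ⟨k, A, B, -, -, rfl⟩
  exact abs_nonneg _

lemma abs_measureReal_inter_sub_mul_le_mixingCoef [IsProbabilityMeasure P] {k m : ℕ} {A B : Set Ω}
    (hA : MeasurableSet[⨆ i ∈ Set.Iic k, MeasurableSpace.comap (ξ i) inferInstance] A)
    (hB : MeasurableSet[⨆ i ∈ Set.Ici (k + m), MeasurableSpace.comap (ξ i) inferInstance] B) :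
    |P.real (A ∩ B) - P.real A * P.real B| ≤ mixingCoef P ξ m := by
  refine le_csSup ⟨1, ?_⟩ ⟨k, A, B, hA, hB, rfl⟩
  rintro _ ⟨-, A, B, -, -, rfl⟩
  exact abs_measureReal_inter_sub_mul_le_one A B

lemma covariance_indicator_preimage_le_mixingCoef [IsProbabilityMeasure P]
    (hξ : ∀ i, Measurable (ξ i)) {A B : Set E} (hA : MeasurableSet A) (hB : MeasurableSet B)
    {i j m : ℕ} (hij : i + m ≤ j) :
    cov[(ξ i ⁻¹' A).indicator (1 : Ω → ℝ), (ξ j ⁻¹' B).indicator 1; P] ≤ mixingCoef P ξ m := by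
  rw [covariance_indicator_one (hξ i hA) (hξ j hB)]
  exact (le_abs_self _).trans <| abs_measureReal_inter_sub_mul_le_mixingCoef
    (measurableSet_iSup_comap_preimage (Set.mem_Iic.2 le_rfl) hA)
    (measurableSet_iSup_comap_preimage (Set.mem_Ici.2 hij) hB)

end Mixing

section Variance

lemma card_filter_range_near_le (n m i : ℕ) :
    ((Finset.range n).filter fun j => j < i + m ∧ i < j + m).card ≤ 2 * m := by
  have hsub : ((Finset.range n).filter fun j => j < i + m ∧ i < j + m) ⊆
      Finset.Ico (i + 1 - m) (i + m) := fun j hj => by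
    simp only [Finset.mem_filter, Finset.mem_Ico] at hj ⊢
    omega
  have hcard := Finset.card_le_card hsub
  rw [Nat.card_Ico] at hcard
  omega

lemma sum_sum_range_le_of_far_le {f : ℕ → ℕ → ℝ} {C ε : ℝ} {m : ℕ} (hC : 0 ≤ C) (hε : 0 ≤ ε)
    (hf : ∀ i j, f i j ≤ C) (hfar : ∀ i j, i + m ≤ j ∨ j + m ≤ i → f i j ≤ ε) (n : ℕ) :
    ∑ i ∈ Finset.range n, ∑ j ∈ Finset.range n, f i j ≤ n * (2 * m * C + n * ε) := by
  have hterm (i j : ℕ) : f i j ≤ (if j < i + m ∧ i < j + m then C else 0) + ε := by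
    split_ifs with hnear
    · linarith [hf i j]
    · simpa using hfar i j (by omega)
  have hrow (i : ℕ) : ∑ j ∈ Finset.range n, f i j ≤ 2 * m * C + n * ε := by
    refine (Finset.sum_le_sum fun j _ => hterm i j).trans ?_
    rw [Finset.sum_add_distrib, ← Finset.sum_filter, Finset.sum_const, Finset.sum_const,
      Finset.card_range, nsmul_eq_mul, nsmul_eq_mul]
    gcongr
    exact_mod_cast card_filter_range_near_le n m i
  calc ∑ i ∈ Finset.range n, ∑ j ∈ Finset.range n, f i j
      ≤ ∑ _i ∈ Finset.range n, (2 * m * C + n * ε) := Finset.sum_le_sum fun i _ => hrow i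
    _ = n * (2 * m * C + n * ε) := by rw [Finset.sum_const, Finset.card_range, nsmul_eq_mul]

lemma variance_sum_indicator_preimage_le {Ω E : Type*} [MeasurableSpace Ω] [MeasurableSpace E]
    {P : Measure Ω} [IsProbabilityMeasure P] {ξ : ℕ → Ω → E} (hξ : ∀ i, Measurable (ξ i))
    {A : Set E} (hA : MeasurableSet A) (m n : ℕ) :
    Var[∑ i ∈ Finset.range n, (ξ i ⁻¹' A).indicator (1 : Ω → ℝ); P] ≤
      n * (2 * m + n * mixingCoef P ξ m) := by
  rw [variance_sum' fun i _ => memLp_indicator_one (hξ i hA), ← mul_one (2 * (m : ℝ))]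
  refine sum_sum_range_le_of_far_le zero_le_one (mixingCoef_nonneg P ξ m)
    (fun i j => covariance_indicator_one_le_one (hξ i hA) (hξ j hA)) (fun i j hij => ?_) n
  obtain hij | hji := hij
  · exact covariance_indicator_preimage_le_mixingCoef hξ hA hA hij
  · rw [covariance_comm]
    exact covariance_indicator_preimage_le_mixingCoef hξ hA hA hji

end Variance

section Empirical

variable {Ω E : Type*} [MeasurableSpace E]

lemma empMeas_real_apply (n : ℕ) (x : ℕ → E) {A : Set E} (hA : MeasurableSet A) :
    (empMeas n x).real A = (n : ℝ)⁻¹ * ∑ i ∈ Finset.range n, A.indicator (1 : E → ℝ) (x i) := by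
  rw [empMeas, measureReal_ennreal_smul_apply, ENNReal.toReal_inv, ENNReal.toReal_natCast,
    measureReal_def, Measure.finsetSum_apply, ENNReal.toReal_sum fun i _ => measure_ne_top _ _]
  congr! with i
  rw [Measure.dirac_apply' _ hA]
  by_cases hi : x i ∈ A <;> simp [hi]

instance isFiniteMeasure_empMeas (n : ℕ) (x : ℕ → E) : IsFiniteMeasure (empMeas n x) := by
  obtain rfl | hn := eq_or_ne n 0
  · simp only [empMeas, Finset.range_zero, Finset.sum_empty, smul_zero]
    infer_instance
  · exact Measure.smul_finite _ (by simpa using hn)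

lemma empMeas_real_process_eq (n : ℕ) (ξ : ℕ → Ω → E) {A : Set E} (hA : MeasurableSet A) :
    (fun ω => (empMeas n (ξ · ω)).real A) =
      (n : ℝ)⁻¹ • ∑ i ∈ Finset.range n, (ξ i ⁻¹' A).indicator (1 : Ω → ℝ) := by
  ext ω
  rw [empMeas_real_apply n _ hA, Pi.smul_apply, Finset.sum_apply, smul_eq_mul]
  rfl

variable [MeasurableSpace Ω] {P : Measure Ω} [IsProbabilityMeasure P] {ξ : ℕ → Ω → E}
  {A : Set E} {n : ℕ}

lemma integral_empMeas_real (hξ : ∀ i, Measurable (ξ i))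
    (hmarg : ∀ i, P.map (ξ i) = P.map (ξ 0)) (hA : MeasurableSet A) (hn : n ≠ 0) :
    ∫ ω, (empMeas n (ξ · ω)).real A ∂P = (P.map (ξ 0)).real A := by
  have hmean (i : ℕ) : ∫ ω, A.indicator (1 : E → ℝ) (ξ i ω) ∂P = (P.map (ξ 0)).real A := by
    rw [← hmarg i, map_measureReal_apply (hξ i) hA]
    exact integral_indicator_one (hξ i hA)
  have hint (i : ℕ) : Integrable (fun ω => A.indicator (1 : E → ℝ) (ξ i ω)) P :=
    ((integrable_const (1 : ℝ)).indicator hA).comp_measurable (hξ i)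
  simp only [empMeas_real_apply n _ hA]
  rw [integral_const_mul, integral_finsetSum _ fun i _ => hint i]
  simp only [hmean, Finset.sum_const, Finset.card_range, nsmul_eq_mul]
  field_simp

lemma variance_empMeas_real_le (hξ : ∀ i, Measurable (ξ i)) (hA : MeasurableSet A) (m : ℕ)
    (hn : n ≠ 0) :
    Var[fun ω => (empMeas n (ξ · ω)).real A; P] ≤ 2 * m / n + mixingCoef P ξ m := by
  rw [empMeas_real_process_eq n ξ hA, variance_smul]
  calc (n : ℝ)⁻¹ ^ 2 * Var[∑ i ∈ Finset.range n, (ξ i ⁻¹' A).indicator (1 : Ω → ℝ); P]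
      ≤ (n : ℝ)⁻¹ ^ 2 * (n * (2 * m + n * mixingCoef P ξ m)) := by
        gcongr
        exact variance_sum_indicator_preimage_le hξ hA m n
    _ = 2 * m / n + mixingCoef P ξ m := by field_simp

lemma measure_le_abs_empMeas_real_sub_le (hξ : ∀ i, Measurable (ξ i))
    (hmarg : ∀ i, P.map (ξ i) = P.map (ξ 0)) (hA : MeasurableSet A) (m : ℕ) (hn : n ≠ 0)
    {η : ℝ} (hη : 0 < η) :
    P {ω | η ≤ |(empMeas n (ξ · ω)).real A - (P.map (ξ 0)).real A|} ≤
      ENNReal.ofReal ((2 * m / n + mixingCoef P ξ m) / η ^ 2) := by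
  have hLp : MemLp (fun ω => (empMeas n (ξ · ω)).real A) 2 P := by
    rw [empMeas_real_process_eq n ξ hA]
    exact (memLp_finsetSum' _ fun i _ => memLp_indicator_one (hξ i hA)).const_smul _
  rw [← integral_empMeas_real hξ hmarg hA hn]
  refine (meas_ge_le_variance_div_sq hLp hη).trans (ENNReal.ofReal_le_ofReal ?_)
  gcongr
  exact variance_empMeas_real_le hξ hA m hn

end Empirical

section UniformWeakLaw

variable {Ω E : Type*} [MeasurableSpace Ω] [MeasurableSpace E] {Ps : Set (Measure Ω)}
  {ξ : ℕ → Ω → E}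

theorem eventually_forall_measure_le_abs_empMeas_real_sub_le
    (hprob : ∀ P ∈ Ps, IsProbabilityMeasure P) (hξ : ∀ i, Measurable (ξ i))
    (hmarg : ∀ P ∈ Ps, ∀ i, P.map (ξ i) = P.map (ξ 0))
    (hmix : ∀ ε : ℝ, 0 < ε → ∃ m, ∀ P ∈ Ps, mixingCoef P ξ m ≤ ε)
    {η : ℝ} (hη : 0 < η) {ε : ENNReal} (hε : 0 < ε) :
    ∀ᶠ n in atTop, ∀ P ∈ Ps, ∀ A, MeasurableSet A →
      P {ω | η ≤ |(empMeas n (ξ · ω)).real A - (P.map (ξ 0)).real A|} ≤ ε := by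
  obtain ⟨r, hr, hrε⟩ := ENNReal.lt_iff_exists_nnreal_btwn.1 hε
  replace hr : (0 : ℝ) < r := by exact_mod_cast hr
  obtain ⟨m, hm⟩ := hmix (r * η ^ 2 / 2) (by positivity)
  have hdiag : ∀ᶠ n : ℕ in atTop, 2 * (m : ℝ) / n < r * η ^ 2 / 2 :=
    (tendsto_const_div_atTop_nhds_zero_nat (2 * (m : ℝ))).eventually_lt_const (by positivity)
  filter_upwards [hdiag, eventually_ne_atTop 0] with n hn hn0 P hP A hA
  have := hprob P hP
  refine (measure_le_abs_empMeas_real_sub_le hξ (hmarg P hP) hA m hn0 hη).trans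
    (le_trans ?_ hrε.le)
  rw [← ENNReal.ofReal_coe_nnreal]
  refine ENNReal.ofReal_le_ofReal ((div_le_iff₀ (by positivity)).2 ?_)
  linarith [hm P hP]

end UniformWeakLaw

section Bracketing

variable {Ω E : Type*} [MeasurableSpace Ω] [MeasurableSpace E]

/-- The discrepancy of two finite measures over a class `𝒞` of sets, the supremum over `C ∈ 𝒞` of
`|μ C - ν C|`. For `𝒞 = Set.range Set.Iic` this is the Kolmogorov distance. -/
noncomputable def discrepancy (𝒞 : Set (Set E)) (μ ν : Measure E) : ℝ :=
  ⨆ C : 𝒞, |μ.real C - ν.real C|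

/-- `𝒮` is an `ε`-bracketing of the class `𝒞`: each `C ∈ 𝒞` lies between two members of `𝒮` whose
`μ`-masses differ by at most `ε`. It reduces uniform deviations over `𝒞` to deviations on the
finite family `𝒮`. -/
structure IsBracketing (μ : Measure E) (ε : ℝ) (𝒞 : Set (Set E)) (𝒮 : Finset (Set E)) : Prop where
  measurableSet : ∀ B ∈ 𝒮, MeasurableSet B
  exists_bracket : ∀ C ∈ 𝒞, ∃ L ∈ 𝒮, ∃ U ∈ 𝒮, L ⊆ C ∧ C ⊆ U ∧ μ.real U ≤ μ.real L + ε

lemma abs_measureReal_sub_le_discrepancy {𝒞 : Set (Set E)} {C : Set E} (hC : C ∈ 𝒞)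
    (μ ν : Measure E) [IsFiniteMeasure μ] [IsFiniteMeasure ν] :
    |μ.real C - ν.real C| ≤ discrepancy 𝒞 μ ν := by
  refine le_ciSup (f := fun C : 𝒞 => |μ.real C - ν.real C|)
    ⟨μ.real .univ + ν.real .univ, ?_⟩ ⟨C, hC⟩
  rintro _ ⟨B, rfl⟩
  refine (abs_sub _ _).trans ?_
  rw [abs_of_nonneg measureReal_nonneg, abs_of_nonneg measureReal_nonneg]
  exact add_le_add (measureReal_mono (Set.subset_univ _)) (measureReal_mono (Set.subset_univ _))

lemma IsBracketing.discrepancy_le {μ ν : Measure E} [IsFiniteMeasure μ] [IsFiniteMeasure ν]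
    {η ε : ℝ} {𝒞 : Set (Set E)} {𝒮 : Finset (Set E)} (h𝒮 : IsBracketing ν ε 𝒞 𝒮)
    (hηε : 0 ≤ η + ε) (hdev : ∀ B ∈ 𝒮, |μ.real B - ν.real B| ≤ η) :
    discrepancy 𝒞 μ ν ≤ η + ε := by
  refine Real.iSup_le (fun ⟨C, hC⟩ => ?_) hηε
  obtain ⟨L, hL, U, hU, hLC, hCU, hgap⟩ := h𝒮.exists_bracket C hC
  have hμL : μ.real L ≤ μ.real C := measureReal_mono hLC
  have hμU : μ.real C ≤ μ.real U := measureReal_mono hCU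
  have hνL : ν.real L ≤ ν.real C := measureReal_mono hLC
  have hνU : ν.real C ≤ ν.real U := measureReal_mono hCU
  have hdevL := abs_le.1 (hdev L hL)
  have hdevU := abs_le.1 (hdev U hU)
  exact abs_le.2 ⟨by linarith, by linarith⟩

lemma IsBracketing.mono {μ : Measure E} {ε ε' : ℝ} {𝒞 : Set (Set E)} {𝒮 : Finset (Set E)}
    (h𝒮 : IsBracketing μ ε 𝒞 𝒮) (hε : ε ≤ ε') : IsBracketing μ ε' 𝒞 𝒮 where
  measurableSet := h𝒮.measurableSet
  exists_bracket C hC := by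
    obtain ⟨L, hL, U, hU, hLC, hCU, hgap⟩ := h𝒮.exists_bracket C hC
    exact ⟨L, hL, U, hU, hLC, hCU, hgap.trans (by gcongr)⟩

theorem tendsto_iSup_measure_le_discrepancy_empMeas {Ps : Set (Measure Ω)} {ξ : ℕ → Ω → E}
    {𝒞 : Set (Set E)} (hprob : ∀ P ∈ Ps, IsProbabilityMeasure P) (hξ : ∀ i, Measurable (ξ i))
    (hmarg : ∀ P ∈ Ps, ∀ i, P.map (ξ i) = P.map (ξ 0))
    (hmix : ∀ ε : ℝ, 0 < ε → ∃ m, ∀ P ∈ Ps, mixingCoef P ξ m ≤ ε)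
    (hbracket : ∀ ε : ℝ, 0 < ε → ∃ N : ℕ, ∀ P ∈ Ps,
      ∃ 𝒮 : Finset (Set E), 𝒮.card ≤ N ∧ IsBracketing (P.map (ξ 0)) ε 𝒞 𝒮)
    {δ : ℝ} (hδ : 0 < δ) :
    Tendsto (fun n : ℕ => ⨆ P ∈ Ps,
      P {ω | δ ≤ discrepancy 𝒞 (empMeas n (ξ · ω)) (P.map (ξ 0))}) atTop (𝓝 0) := by
  rw [ENNReal.tendsto_nhds_zero]
  intro ε hε
  obtain ⟨N, hN⟩ := hbracket (δ / 3) (by positivity)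
  have hεN : 0 < ε / N := ENNReal.div_pos hε.ne' (ENNReal.natCast_ne_top N)
  filter_upwards [eventually_forall_measure_le_abs_empMeas_real_sub_le hprob hξ hmarg hmix
    (by positivity : 0 < δ / 3) hεN] with n hn
  refine iSup₂_le fun P hP => ?_
  have := hprob P hP
  obtain ⟨𝒮, hcard, h𝒮⟩ := hN P hP
  let deviation (B : Set E) := {ω | δ / 3 ≤ |(empMeas n (ξ · ω)).real B - (P.map (ξ 0)).real B|}
  have hcover : {ω | δ ≤ discrepancy 𝒞 (empMeas n (ξ · ω)) (P.map (ξ 0))} ⊆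
      ⋃ B ∈ 𝒮, deviation B := fun ω hω => by
    by_contra hgood
    simp only [deviation, Set.mem_iUnion, Set.mem_ofPred_eq, not_exists, not_le] at hω hgood
    have := h𝒮.discrepancy_le (by positivity) fun B hB => (hgood B hB).le
    linarith
  calc P {ω | δ ≤ discrepancy 𝒞 (empMeas n (ξ · ω)) (P.map (ξ 0))}
      ≤ ∑ B ∈ 𝒮, P (deviation B) := (measure_mono hcover).trans (measure_biUnion_finset_le _ _)
    _ ≤ 𝒮.card • (ε / N) :=
        Finset.sum_le_card_nsmul _ _ _ fun B hB => hn P hP B (h𝒮.measurableSet B hB)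
    _ ≤ N * (ε / N) := by rw [nsmul_eq_mul]; gcongr
    _ ≤ ε := ENNReal.mul_div_le

end Bracketing

section HalfLines

lemma measure_le_of_forall_isCompact {α : Type*} [TopologicalSpace α] [MeasurableSpace α]
    {μ : Measure α} [IsFiniteMeasure μ] [μ.InnerRegularCompactLTTop] {s : Set α}
    (hs : MeasurableSet s) {c : ENNReal}
    (h : ∀ K, IsCompact K → K.Nonempty → K ⊆ s → μ K ≤ c) : μ s ≤ c := by
  rw [hs.measure_eq_iSup_isCompact_of_ne_top (measure_ne_top μ s)]
  refine iSup₂_le fun K hKs => iSup_le fun hK => ?_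
  obtain rfl | hne := K.eq_empty_or_nonempty
  · simp
  · exact h K hK hne hKs

variable {α : Type*} [LinearOrder α] [TopologicalSpace α] [MeasurableSpace α] {μ : Measure α}

lemma measure_le_of_forall_measure_Iic_le [ClosedIciTopology α] [IsFiniteMeasure μ]
    [μ.InnerRegularCompactLTTop] {s : Set α} (hs : MeasurableSet s) {c : ENNReal}
    (h : ∀ y ∈ s, μ (Set.Iic y) ≤ c) : μ s ≤ c :=
  measure_le_of_forall_isCompact hs fun _ hK hne hKs =>
    have ⟨y, hy, hmax⟩ := hK.exists_isGreatest hne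
    (measure_mono hmax).trans (h y (hKs hy))

lemma measure_le_of_forall_measure_Ici_le [ClosedIicTopology α] [IsFiniteMeasure μ]
    [μ.InnerRegularCompactLTTop] {s : Set α} (hs : MeasurableSet s) {c : ENNReal}
    (h : ∀ y ∈ s, μ (Set.Ici y) ≤ c) : μ s ≤ c :=
  measure_le_of_forall_isCompact hs fun _ hK hne hKs =>
    have ⟨y, hy, hmin⟩ := hK.exists_isLeast hne
    (measure_mono hmin).trans (h y (hKs hy))

variable [OrderTopology α] [BorelSpace α]

lemma measurableSet_setOf_measureReal_Iic_lt [IsFiniteMeasure μ] (q : ℝ) :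
    MeasurableSet {y | μ.real (Set.Iic y) < q} :=
  IsLowerSet.ordConnected (fun _ _ hab ha =>
    (measureReal_mono (Set.Iic_subset_Iic.2 hab)).trans_lt ha) |>.measurableSet

lemma measurableSet_setOf_measureReal_Iio_lt [IsFiniteMeasure μ] (q : ℝ) :
    MeasurableSet {y | μ.real (Set.Iio y) < q} :=
  IsLowerSet.ordConnected (fun _ _ hab ha =>
    (measureReal_mono (Set.Iio_subset_Iio hab)).trans_lt ha) |>.measurableSet

lemma measureReal_setOf_measureReal_Iic_lt_le [IsFiniteMeasure μ] [μ.InnerRegularCompactLTTop]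
    {q : ℝ} (hq : 0 ≤ q) : μ.real {y | μ.real (Set.Iic y) < q} ≤ q := by
  refine ENNReal.toReal_le_of_le_ofReal hq <|
    measure_le_of_forall_measure_Iic_le (measurableSet_setOf_measureReal_Iic_lt q) fun y hy => ?_
  rw [← ofReal_measureReal]
  exact ENNReal.ofReal_le_ofReal (le_of_lt hy)

lemma le_measureReal_setOf_measureReal_Iio_lt [IsProbabilityMeasure μ]
    [μ.InnerRegularCompactLTTop] {q : ℝ} (hq : q ≤ 1) :
    q ≤ μ.real {y | μ.real (Set.Iio y) < q} := by
  have hmeas := measurableSet_setOf_measureReal_Iio_lt (μ := μ) q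
  have hcompl : μ.real {y | μ.real (Set.Iio y) < q}ᶜ ≤ 1 - q := by
    refine ENNReal.toReal_le_of_le_ofReal (sub_nonneg.2 hq) <|
      measure_le_of_forall_measure_Ici_le hmeas.compl fun y hy => ?_
    rw [Set.mem_compl_iff, Set.mem_ofPred_eq, not_lt] at hy
    rw [← ofReal_measureReal, ← Set.compl_Iio, probReal_compl_eq_one_sub measurableSet_Iio]
    exact ENNReal.ofReal_le_ofReal (sub_le_sub_left hy 1)
  rw [probReal_compl_eq_one_sub hmeas] at hcompl
  linarith

lemma exists_isBracketing_range_Iic [IsProbabilityMeasure μ] [μ.InnerRegularCompactLTTop]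
    {m : ℕ} (hm : m ≠ 0) :
    ∃ 𝒮 : Finset (Set α), 𝒮.card ≤ 2 * (m + 1) ∧
      IsBracketing μ (1 / m) (Set.range Set.Iic) 𝒮 := by
  classical
  let lower (k : ℕ) : Set α := {y | μ.real (Set.Iio y) < k / m}
  let upper (k : ℕ) : Set α := {y | μ.real (Set.Iic y) < (k + 1 : ℕ) / m}
  refine ⟨(Finset.range (m + 1)).image lower ∪ (Finset.range (m + 1)).image upper, ?_, ?_, ?_⟩
  · have hlower := Finset.card_image_le (s := Finset.range (m + 1)) (f := lower)
    have hupper := Finset.card_image_le (s := Finset.range (m + 1)) (f := upper)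
    rw [Finset.card_range] at hlower hupper
    exact (Finset.card_union_le _ _).trans (by omega)
  · simp only [Finset.mem_union, Finset.mem_image]
    rintro _ (⟨k, -, rfl⟩ | ⟨k, -, rfl⟩)
    · exact measurableSet_setOf_measureReal_Iio_lt _
    · exact measurableSet_setOf_measureReal_Iic_lt _
  · rintro _ ⟨x, rfl⟩
    have hm0 : (0 : ℝ) < m := by positivity
    set k := ⌊μ.real (Set.Iic x) * m⌋₊
    have hk_le : (k : ℝ) / m ≤ μ.real (Set.Iic x) :=
      (div_le_iff₀ hm0).2 (Nat.floor_le (by positivity))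
    have hk_lt : μ.real (Set.Iic x) < (k + 1 : ℕ) / m :=
      (lt_div_iff₀ hm0).2 (by exact_mod_cast Nat.lt_floor_add_one _)
    have hk_one : (k : ℝ) / m ≤ 1 := hk_le.trans measureReal_le_one
    have hk_mem : k ∈ Finset.range (m + 1) :=
      Finset.mem_range_succ_iff.2 (by exact_mod_cast (div_le_one hm0).1 hk_one)
    refine ⟨lower k, Finset.mem_union_left _ (Finset.mem_image_of_mem _ hk_mem),
      upper k, Finset.mem_union_right _ (Finset.mem_image_of_mem _ hk_mem), fun y hy => ?_,
      fun y hy => (measureReal_mono (Set.Iic_subset_Iic.2 hy)).trans_lt hk_lt, ?_⟩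
    · refine Set.mem_Iic.2 (le_of_not_gt fun hxy => ?_)
      exact (hk_le.trans (measureReal_mono (Set.Iic_subset_Iio.2 hxy))).not_gt hy
    · calc μ.real (upper k) ≤ (k + 1 : ℕ) / m :=
            measureReal_setOf_measureReal_Iic_lt_le (by positivity)
        _ = k / m + 1 / m := by push_cast; ring
        _ ≤ μ.real (lower k) + 1 / m := by
            gcongr
            exact le_measureReal_setOf_measureReal_Iio_lt hk_one

end HalfLines

lemma dLevy_le_discrepancy_range_Iic (μ ν : Measure ℝ) [IsFiniteMeasure μ] [IsFiniteMeasure ν] :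
    dLevy μ ν ≤ discrepancy (Set.range Set.Iic) μ ν := by
  refine le_of_forall_gt_imp_ge_of_dense fun ε hε => ?_
  have hcdf (x : ℝ) : |cdfR μ x - cdfR ν x| ≤ discrepancy (Set.range Set.Iic) μ ν :=
    abs_measureReal_sub_le_discrepancy (Set.mem_range_self x) μ ν
  have hε0 : 0 < ε := ((abs_nonneg _).trans (hcdf 0)).trans_lt hε
  have hmono : Monotone (cdfR μ) := fun _ _ hxy => measureReal_mono (Set.Iic_subset_Iic.2 hxy)
  refine csInf_le ⟨0, fun r hr => hr.1.le⟩ ⟨hε0, fun x => ?_⟩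
  have hx := abs_le.1 (hcdf x)
  have hleft : cdfR μ (x - ε) ≤ cdfR μ x := hmono (by linarith)
  have hright : cdfR μ x ≤ cdfR μ (x + ε) := hmono (by linarith)
  exact ⟨by linarith, by linarith⟩

theorem ugc_levy_general {Ω : Type*} [MeasurableSpace Ω] {Ps : Set (Measure Ω)} {ξ : ℕ → Ω → ℝ}
    (hprob : ∀ P ∈ Ps, IsProbabilityMeasure P) (hξ : ∀ i, Measurable (ξ i))
    (hmarg : ∀ P ∈ Ps, ∀ i, P.map (ξ i) = P.map (ξ 0))
    (hmix : ∀ ε : ℝ, 0 < ε → ∃ m, ∀ P ∈ Ps, mixingCoef P ξ m ≤ ε) {δ : ℝ} (hδ : 0 < δ) :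
    Tendsto (fun n : ℕ => ⨆ P ∈ Ps,
      P {ω | δ ≤ discrepancy (Set.range Set.Iic) (empMeas n (ξ · ω)) (P.map (ξ 0))})
      atTop (𝓝 0) := by
  refine tendsto_iSup_measure_le_discrepancy_empMeas hprob hξ hmarg hmix (fun ε hε => ?_) hδ
  obtain ⟨m, hm⟩ := exists_nat_one_div_lt hε
  refine ⟨2 * (m + 1 + 1), fun P hP => ?_⟩
  have := hprob P hP
  have := Measure.isProbabilityMeasure_map (μ := P) (hξ 0).aemeasurable
  obtain ⟨𝒮, hcard, h𝒮⟩ := exists_isBracketing_range_Iic (μ := P.map (ξ 0)) m.succ_ne_zero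
  exact ⟨𝒮, hcard, h𝒮.mono (by exact_mod_cast hm.le)⟩

/-- **UGC property w.r.t. the Lévy metric** (Corollary 3.9): for a class `𝓟` of laws on
`ℝ^ℕ` with identical marginals and uniformly decaying strong mixing coefficients, the
empirical measures converge to the marginal in probability w.r.t. `d_Lévy`, uniformly
over `𝓟`. -/
theorem ugc_levy
    (Ps : Set (Measure (ℕ → ℝ)))
    (hprob : ∀ P ∈ Ps, IsProbabilityMeasure P)
    -- (a) identical marginals
    (ha : ∀ P ∈ Ps, ∀ i : ℕ, P.map (fun x => x i) = P.map (fun x => x 0))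
    -- (c) uniformly decaying strong mixing coefficients
    (hc : ∀ ε : ℝ, 0 < ε → ∃ n₀ : ℕ, ∀ n ≥ n₀, ∀ P ∈ Ps,
      mixingCoef P (fun i x => x i) n ≤ ε) :
    ∀ δ : ℝ, 0 < δ →
      Tendsto (fun n : ℕ => ⨆ P ∈ Ps,
          P {x : ℕ → ℝ | δ ≤ dLevy (empMeas n x) (Measure.map (fun y => y 0) P)})
        atTop (nhds 0) := by
  intro δ hδ
  have hmix (ε : ℝ) (hε : 0 < ε) : ∃ m, ∀ P ∈ Ps, mixingCoef P (fun i x => x i) m ≤ ε :=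
    (hc ε hε).imp fun m hm => hm m le_rfl
  refine tendsto_of_tendsto_of_tendsto_of_le_of_le tendsto_const_nhds
    (ugc_levy_general hprob measurable_pi_apply ha hmix hδ) (fun _ => zero_le)
    fun n => iSup₂_mono fun P hP => measure_mono fun x hx => ?_
  have := hprob P hP
  exact le_trans hx (dLevy_le_discrepancy_range_Iic _ _)
end

section
/- Let a₀ ≠ 0, a ≠ 0 and |q| < 1, and define a_s := a q^s for s ≥ 1. Then for all complex z with |z| ≤ 1 and 1 − qz ≠ 0 one has ∑_{s=0}^∞ a_s z^s = (a₀ − (a₀−a)q·z)/(1 − qz), and the reciprocal 1/∑_{s=0}^∞ a_s z^s admits (as a formal power series, convergent in a neighborhood of 0) the representation ∑_{s=0}^∞ b_s z^s with b₀ = 1/a₀ and b_s = −a (a₀−a)^{s−1} a₀^{−(s+1)} q^s for s ≥ 1 (with the convention 0⁰ := 1). Moreover, if specifically a₀ = 1, a = (φ₁+θ₁)/φ₁ and q = φ₁ for real numbers φ₁, θ₁ with 0 < |φ₁| < 1 and |θ₁| < 1, then ∑_{s=0}^∞ |b_s| = 1 + |φ₁+θ₁|/(1−|θ₁|). -/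
open Filter Topology

/-!
Both `(a_s)` and `(b_s)` are a free initial term followed by a geometric progression. Multiplying
the generating function of such a sequence by `1 - r X`, where `r` is the ratio, leaves a polynomial
of degree at most one. For `(a_s)` it is `a₀ (1 - ρ X)` with `ρ = (a₀ - a) q / a₀`; for `(b_s)`, of
ratio `ρ`, it is `a₀⁻¹ (1 - q X)`. The two series are therefore reciprocal to each other. Absolute
values of such a sequence are again of this form, so the norm sum is a geometric series as well.
-/

/-- The sequence `c, u, u r, u r², …`, a geometric progression after its initial term. The
progression is given by its first term `u` rather than as `s ↦ v r ^ s`, so that `r = 0` still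
allows `u ≠ 0`, as happens for the reciprocal coefficients when `a = a₀`. -/
def geometricTail {M : Type*} [Monoid M] (c u r : M) : ℕ → M
  | 0 => c
  | s + 1 => u * r ^ s

theorem map_geometricTail {M N F : Type*} [Monoid M] [Monoid N] [FunLike F M N]
    [MonoidHomClass F M N] (f : F) (c u r : M) (s : ℕ) :
    f (geometricTail c u r s) = geometricTail (f c) (f u) (f r) s := by
  cases s <;> simp [geometricTail]

section PowerSeries

open PowerSeries

theorem one_sub_C_mul_X_mul_mk_geometricTail {R : Type*} [CommRing R] (c u r : R) :
    (1 - C r * X) * mk (geometricTail c u r) = C c + C (u - c * r) * X := by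
  ext n
  rw [sub_mul, one_mul, mul_assoc]
  rcases n with _ | _ | n
  · simp [geometricTail]
  · simp [geometricTail, coeff_succ_X_mul, mul_comm]
  · simp [geometricTail, coeff_succ_X_mul, pow_succ', mul_left_comm]

theorem mk_geometricTail_mul_mk_geometricTail_inv {K : Type*} [Field K] {c : K} (hc : c ≠ 0)
    (u r : K) :
    mk (geometricTail c u r) * mk (geometricTail c⁻¹ (-u / c ^ 2) (r - u / c)) = 1 := by
  have one_sub_ne_zero (t : K) : (1 - C t * X : K⟦X⟧) ≠ 0 := fun h => by
    simpa using congrArg constantCoeff h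
  have direct : (1 - C r * X) * mk (geometricTail c u r) = C c * (1 - C (r - u / c) * X) := by
    have : u - c * r = -(c * (r - u / c)) := by field_simp; ring
    rw [one_sub_C_mul_X_mul_mk_geometricTail, this, map_neg, map_mul]
    ring
  have reciprocal : (1 - C (r - u / c) * X) * mk (geometricTail c⁻¹ (-u / c ^ 2) (r - u / c)) =
      C c⁻¹ * (1 - C r * X) := by
    have : -u / c ^ 2 - c⁻¹ * (r - u / c) = -(c⁻¹ * r) := by field_simp; ring
    rw [one_sub_C_mul_X_mul_mk_geometricTail, this, map_neg, map_mul]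
    ring
  have C_mul_C_inv : (C c * C c⁻¹ : K⟦X⟧) = 1 := by rw [← map_mul, mul_inv_cancel₀ hc, map_one]
  apply mul_left_cancel₀ (mul_ne_zero (one_sub_ne_zero r) (one_sub_ne_zero (r - u / c)))
  rw [mul_mul_mul_comm, direct, reciprocal, mul_mul_mul_comm, C_mul_C_inv]
  ring

theorem sum_range_geometricTail_mul_geometricTail_inv {K : Type*} [Field K] {c : K} (hc : c ≠ 0)
    (u r : K) (n : ℕ) :
    ∑ i ∈ Finset.range (n + 1), geometricTail c u r i *
      geometricTail c⁻¹ (-u / c ^ 2) (r - u / c) (n - i) = if n = 0 then 1 else 0 := by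
  have h := congrArg (coeff n) (mk_geometricTail_mul_mk_geometricTail_inv hc u r)
  simpa only [coeff_mul, coeff_mk, coeff_one, Finset.Nat.sum_antidiagonal_eq_sum_range_succ_mk]
    using h

end PowerSeries

section NormedField

variable {L : Type*} [NormedField L]

theorem hasSum_geometricTail_mul_pow (c u : L) {r z : L} (h : ‖r * z‖ < 1) :
    HasSum (fun s => geometricTail c u r s * z ^ s) (c + u * z / (1 - r * z)) := by
  have tail : HasSum (fun s => geometricTail c u r (s + 1) * z ^ (s + 1))
      (u * z / (1 - r * z)) := by
    rw [div_eq_mul_inv]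
    refine ((hasSum_geometric_of_norm_lt_one h).mul_left (u * z)).congr_fun fun s => ?_
    rw [geometricTail]
    ring
  simpa [geometricTail] using
    HasSum.zero_add (f := fun s => geometricTail c u r s * z ^ s) tail

theorem eventually_summable_geometricTail_mul_pow (c u r : L) :
    ∀ᶠ z in 𝓝 0, Summable fun s => geometricTail c u r s * z ^ s := by
  have hr : Tendsto (fun z => ‖r * z‖) (𝓝 0) (𝓝 0) :=
    Continuous.tendsto' (by fun_prop) _ _ (by simp)
  filter_upwards [hr.eventually_lt_const one_pos] with z hz
  exact (hasSum_geometricTail_mul_pow c u hz).summable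

theorem hasSum_norm_geometricTail (c u : L) {r : L} (h : ‖r‖ < 1) :
    HasSum (fun s => ‖geometricTail c u r s‖) (‖c‖ + ‖u‖ / (1 - ‖r‖)) := by
  have hr : ‖‖r‖ * 1‖ < 1 := by simpa using h
  have norm_eq (s : ℕ) : ‖geometricTail c u r s‖ = geometricTail ‖c‖ ‖u‖ ‖r‖ s :=
    map_geometricTail normHom c u r s
  simpa [norm_eq] using hasSum_geometricTail_mul_pow ‖c‖ ‖u‖ hr

end NormedField

theorem eq_geometricTail_of_eq_mul_pow {M : Type*} [Monoid M] {a₀ v q : M} {a : ℕ → M}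
    (ha0 : a 0 = a₀) (has : ∀ s, 1 ≤ s → a s = v * q ^ s) : a = geometricTail a₀ (v * q) q := by
  ext s
  cases s with
  | zero => exact ha0
  | succ s => rw [has (s + 1) (by omega), geometricTail, pow_succ', mul_assoc]

theorem eq_geometricTail_inv_of_eq_mul_zpow {K : Type*} [Field K] {a₀ v q : K} (ha₀ : a₀ ≠ 0)
    {b : ℕ → K} (hb0 : b 0 = 1 / a₀)
    (hbs : ∀ s : ℕ, 1 ≤ s →
      b s = -v * (a₀ - v) ^ (s - 1) * a₀ ^ (-((s : ℤ) + 1)) * q ^ s) :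
    b = geometricTail a₀⁻¹ (-(v * q) / a₀ ^ 2) (q - v * q / a₀) := by
  ext s
  cases s with
  | zero => rw [hb0, one_div, geometricTail]
  | succ s =>
    have ratio : q - v * q / a₀ = (a₀ - v) * q / a₀ := by field_simp
    have zpow_eq : a₀ ^ (-(((s + 1 : ℕ) : ℤ) + 1)) = (a₀ ^ (s + 2))⁻¹ := by
      rw [zpow_neg]
      norm_cast
    rw [hbs (s + 1) (by omega), geometricTail, ratio, zpow_eq, Nat.add_sub_cancel, div_pow, mul_pow]
    field_simp
    ring

theorem reciprocal_power_series_geometric_general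
    {K L : Type*} [NormedField K] [NormedField L] [NormedAlgebra K L]
    (a₀ aa q : K) (ha₀ : a₀ ≠ 0)
    (a : ℕ → K) (ha0 : a 0 = a₀) (has : ∀ s : ℕ, 1 ≤ s → a s = aa * q ^ s)
    (b : ℕ → K) (hb0 : b 0 = 1 / a₀)
    (hbs : ∀ s : ℕ, 1 ≤ s →
      b s = -aa * (a₀ - aa) ^ (s - 1) * a₀ ^ (-((s : ℤ) + 1)) * q ^ s) :
    (∀ z : L, ‖algebraMap K L q * z‖ < 1 →
      HasSum (fun s => algebraMap K L (a s) * z ^ s)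
        ((algebraMap K L a₀ - (algebraMap K L a₀ - algebraMap K L aa) * algebraMap K L q * z) /
          (1 - algebraMap K L q * z))) ∧
    (∀ n : ℕ, (∑ i ∈ Finset.range (n + 1), a i * b (n - i)) = if n = 0 then 1 else 0) ∧
    (∀ᶠ z : L in 𝓝 0, Summable fun s => algebraMap K L (b s) * z ^ s) ∧
    (∀ φ θ : K, φ ≠ 0 → ‖θ‖ < 1 → a₀ = 1 → aa = (φ + θ) / φ → q = φ →
      HasSum (fun s => ‖b s‖) (1 + ‖φ + θ‖ / (1 - ‖θ‖))) := by
  obtain rfl := eq_geometricTail_of_eq_mul_pow ha0 has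
  obtain rfl := eq_geometricTail_inv_of_eq_mul_zpow ha₀ hb0 hbs
  refine ⟨fun z hz => ?_, sum_range_geometricTail_mul_geometricTail_inv ha₀ _ _, ?_, ?_⟩
  · have hne : 1 - algebraMap K L q * z ≠ 0 := (isUnit_one_sub_of_norm_lt_one hz).ne_zero
    simp only [map_geometricTail, map_mul]
    convert hasSum_geometricTail_mul_pow _ _ hz using 1
    field_simp
    ring
  · simp only [map_geometricTail]
    exact eventually_summable_geometricTail_mul_pow _ _ _
  · rintro φ θ hφ hθ rfl rfl rfl
    have first_term : -((q + θ) / q * q) / 1 ^ 2 = -(q + θ) := by field_simp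
    have ratio : q - (q + θ) / q * q / 1 = -θ := by field_simp; ring
    rw [first_term, ratio]
    simpa only [norm_neg, inv_one, norm_one] using
      hasSum_norm_geometricTail (1 : K)⁻¹ (-(q + θ)) ((norm_neg θ).trans_lt hθ)

/-- **Reciprocal power series of a geometric tail sequence** (Example B.3): for
`a_0 ≠ 0`, `a ≠ 0`, `|q| < 1` and `a_s = a q^s` (`s ≥ 1`), the power series
`∑ a_s z^s` equals `(a₀ − (a₀−a)q z)/(1 − q z)` on the closed unit disc, its reciprocal
power series has coefficients `b₀ = 1/a₀`, `b_s = −a (a₀−a)^{s−1} a₀^{−(s+1)} q^s`, and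
in the ARMA(1,1) case `a₀ = 1`, `a = (φ₁+θ₁)/φ₁`, `q = φ₁` one has
`∑_s |b_s| = 1 + |φ₁+θ₁|/(1−|θ₁|)`. -/
theorem reciprocal_power_series_geometric
    (a₀ aa q : ℝ) (ha₀ : a₀ ≠ 0) (haa : aa ≠ 0) (hq : |q| < 1)
    (a : ℕ → ℝ) (ha0 : a 0 = a₀) (has : ∀ s : ℕ, 1 ≤ s → a s = aa * q ^ s)
    (b : ℕ → ℝ) (hb0 : b 0 = 1 / a₀)
    (hbs : ∀ s : ℕ, 1 ≤ s →
      b s = -aa * (a₀ - aa) ^ (s - 1) * a₀ ^ (-((s : ℤ) + 1)) * q ^ s) :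
    -- the closed form of the power series on the closed unit disc
    (∀ z : ℂ, ‖z‖ ≤ 1 → (1 : ℂ) - (q : ℂ) * z ≠ 0 →
      (∑' s : ℕ, (a s : ℂ) * z ^ s) =
        ((a₀ : ℂ) - ((a₀ : ℂ) - (aa : ℂ)) * (q : ℂ) * z) / (1 - (q : ℂ) * z)) ∧
    -- (b_s) is the reciprocal power series of (a_s) ...
    (∀ n : ℕ, (∑ i ∈ Finset.range (n + 1), a i * b (n - i)) = if n = 0 then 1 else 0) ∧
    -- ... convergent in a neighborhood of 0
    (∃ r : ℝ, 0 < r ∧ ∀ z : ℂ, ‖z‖ < r → Summable fun s : ℕ => (b s : ℂ) * z ^ s) ∧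
    -- the ARMA(1,1) special case
    (∀ φ₁ θ₁ : ℝ, 0 < |φ₁| → |φ₁| < 1 → |θ₁| < 1 →
      a₀ = 1 → aa = (φ₁ + θ₁) / φ₁ → q = φ₁ →
      (∑' s : ℕ, |b s|) = 1 + |φ₁ + θ₁| / (1 - |θ₁|)) := by
  obtain ⟨closed_form, reciprocal, summable, arma⟩ :=
    reciprocal_power_series_geometric_general (L := ℂ) a₀ aa q ha₀ a ha0 has b hb0 hbs
  have norm_lt (z : ℂ) (hz : ‖z‖ ≤ 1) : ‖(q : ℂ) * z‖ < 1 := by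
    simpa using (mul_le_of_le_one_right (abs_nonneg q) hz).trans_lt hq
  exact ⟨fun z hz _ => (closed_form z (norm_lt z hz)).tsum_eq, reciprocal,
    by simpa [Metric.eventually_nhds_iff] using summable,
    fun φ₁ θ₁ hφ _ hθ h₁ h₂ h₃ => (arma φ₁ θ₁ (abs_pos.1 hφ) hθ h₁ h₂ h₃).tsum_eq⟩
end

section
/- Let μ, ν be probability measures on ℝ with finite first moments and distribution functions F_μ, F_ν. Then |∫ y μ(dy) − ∫ y ν(dy)| ≤ ∫_ℝ |F_μ(y) − F_ν(y)| dy. Consequently, if φ is a u-shaped function with ∫_ℝ 1/φ(y) dy < ∞, then for all μ, ν ∈ 𝓜₁^(φ)(ℝ) with finite first moments: |∫ y μ(dy) − ∫ y ν(dy)| ≤ d_(φ)(μ,ν) · ∫_ℝ 1/φ(y) dy; in particular the mean functional T⁽¹⁾(μ) := ∫ y μ(dy) is continuous on 𝓜₁^(φ)(ℝ) w.r.t. d_(φ). -/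
open MeasureTheory Filter Topology

/-- The Kolmogorov `φ`-distance `sup_y |F_μ(y) − F_ν(y)| φ(y)` (with values in `ℝ≥0∞`). -/
noncomputable def dphi (φ : ℝ → ℝ) (μ ν : Measure ℝ) : ENNReal :=
  ⨆ y : ℝ, ENNReal.ofReal (|cdfR μ y - cdfR ν y| * φ y)

/-!
Write `x` as the integral over `y` of `1_{0 ≤ y} - 1_{x ≤ y}` and integrate against `μ`: by Fubini,
`∫ x dμ` is the integral of `μ(ℝ) 1_{0 ≤ y} - F_μ(y)`. For two measures of equal mass the Heaviside
terms cancel, so the means differ by the integral of `F_ν - F_μ`; and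
`|F_μ - F_ν| ≤ d_(φ)(μ, ν) / φ` pointwise.
-/

/-- The layer-cake kernel `1_{0 ≤ y} - 1_{x ≤ y}`, through which a real number `x` of either sign is
recovered as `∫ layerKernel x y dy`. -/
noncomputable def layerKernel (x y : ℝ) : ℝ :=
  (Set.Ici 0).indicator 1 y - (Set.Ici x).indicator 1 y

lemma layerKernel_eq_indicator_Ico_sub (x y : ℝ) :
    layerKernel x y = (Set.Ico 0 x).indicator 1 y - (Set.Ico x 0).indicator 1 y := by
  simp only [layerKernel, Set.indicator_apply, Set.mem_Ici, Set.mem_Ico, Pi.one_apply]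
  grind

lemma abs_layerKernel (x y : ℝ) :
    |layerKernel x y| = (Set.Ico 0 x).indicator 1 y + (Set.Ico x 0).indicator 1 y := by
  simp only [layerKernel, Set.indicator_apply, Set.mem_Ici, Set.mem_Ico, Pi.one_apply]
  grind

lemma integrable_indicator_Ico_one (a b : ℝ) :
    Integrable ((Set.Ico a b).indicator (1 : ℝ → ℝ)) :=
  (integrable_indicator_iff measurableSet_Ico).2 (integrableOn_const (by simp))

lemma integrable_layerKernel (x : ℝ) : Integrable (layerKernel x) := by
  rw [funext (layerKernel_eq_indicator_Ico_sub x)]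
  exact (integrable_indicator_Ico_one 0 x).sub (integrable_indicator_Ico_one x 0)

lemma integral_layerKernel (x : ℝ) : ∫ y, layerKernel x y = x := by
  simp_rw [layerKernel_eq_indicator_Ico_sub]
  rw [integral_sub (integrable_indicator_Ico_one 0 x) (integrable_indicator_Ico_one x 0),
    integral_indicator_one measurableSet_Ico, integral_indicator_one measurableSet_Ico,
    Real.volume_real_Ico, Real.volume_real_Ico, sub_zero, zero_sub, max_zero_sub_eq_self]

lemma integral_abs_layerKernel (x : ℝ) : ∫ y, |layerKernel x y| = |x| := by
  simp_rw [abs_layerKernel]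
  rw [integral_add (integrable_indicator_Ico_one 0 x) (integrable_indicator_Ico_one x 0),
    integral_indicator_one measurableSet_Ico, integral_indicator_one measurableSet_Ico,
    Real.volume_real_Ico, Real.volume_real_Ico, sub_zero, zero_sub,
    max_zero_add_max_neg_zero_eq_abs_self]

lemma measurable_uncurry_layerKernel : Measurable (Function.uncurry layerKernel) :=
  ((measurable_one.indicator measurableSet_Ici).comp measurable_snd).sub
    (measurable_one.indicator (measurableSet_le measurable_fst measurable_snd))

lemma integrable_uncurry_layerKernel {μ : Measure ℝ}
    (hμ : Integrable (fun x : ℝ => x) μ) :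
    Integrable (Function.uncurry layerKernel) (μ.prod volume) := by
  refine (integrable_prod_iff measurable_uncurry_layerKernel.aestronglyMeasurable).2
    ⟨.of_forall integrable_layerKernel, ?_⟩
  simpa only [Function.uncurry, Real.norm_eq_abs, integral_abs_layerKernel] using hμ.abs

section FiniteMeasure

variable {μ ν : Measure ℝ} [IsFiniteMeasure μ] [IsFiniteMeasure ν]

lemma integral_layerKernel_left (y : ℝ) :
    ∫ x, layerKernel x y ∂μ = μ.real Set.univ * (Set.Ici 0).indicator 1 y - cdfR μ y := by
  have indicator_swap (x : ℝ) :
      (Set.Ici x).indicator (1 : ℝ → ℝ) y = (Set.Iic y).indicator 1 x := rfl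
  simp_rw [layerKernel, indicator_swap]
  rw [integral_sub (integrable_const _) ((integrable_const 1).indicator measurableSet_Iic),
    integral_const, integral_indicator_one measurableSet_Iic, smul_eq_mul, cdfR, measureReal_def,
    measureReal_def]

lemma integrable_heaviside_sub_cdfR (hμ : Integrable (fun x : ℝ => x) μ) :
    Integrable fun y => μ.real Set.univ * (Set.Ici 0).indicator 1 y - cdfR μ y := by
  simpa only [Function.uncurry, integral_layerKernel_left] using
    (integrable_uncurry_layerKernel hμ).integral_prod_right

lemma integral_heaviside_sub_cdfR (hμ : Integrable (fun x : ℝ => x) μ) :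
    ∫ y, (μ.real Set.univ * (Set.Ici 0).indicator 1 y - cdfR μ y) = ∫ x, x ∂μ := by
  simpa only [integral_layerKernel_left, integral_layerKernel] using
    (integral_integral_swap (integrable_uncurry_layerKernel hμ)).symm

lemma integral_id_sub_integral_id_eq_integral_cdfR_sub (hmass : μ Set.univ = ν Set.univ)
    (hμ : Integrable (fun x : ℝ => x) μ) (hν : Integrable (fun x : ℝ => x) ν) :
    (∫ x, x ∂μ) - ∫ x, x ∂ν = ∫ y, (cdfR ν y - cdfR μ y) := by
  rw [← integral_heaviside_sub_cdfR hμ, ← integral_heaviside_sub_cdfR hν,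
    ← integral_sub (integrable_heaviside_sub_cdfR hμ) (integrable_heaviside_sub_cdfR hν)]
  simp only [measureReal_def, hmass, sub_sub_sub_cancel_left]

lemma abs_integral_id_sub_le_integral_abs_cdfR_sub (hmass : μ Set.univ = ν Set.univ)
    (hμ : Integrable (fun x : ℝ => x) μ) (hν : Integrable (fun x : ℝ => x) ν) :
    |(∫ x, x ∂μ) - ∫ x, x ∂ν| ≤ ∫ y, |cdfR μ y - cdfR ν y| := by
  rw [integral_id_sub_integral_id_eq_integral_cdfR_sub hmass hμ hν]
  simp_rw [abs_sub_comm (cdfR μ _)]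
  exact abs_integral_le_integral_abs

end FiniteMeasure

section Weight

variable {φ : ℝ → ℝ}

lemma ofReal_abs_cdfR_sub_le_dphi_mul (μ ν : Measure ℝ) {y : ℝ} (hφ : 0 < φ y) :
    ENNReal.ofReal |cdfR μ y - cdfR ν y| ≤ dphi φ μ ν * ENNReal.ofReal (1 / φ y) :=
  calc ENNReal.ofReal |cdfR μ y - cdfR ν y|
      = ENNReal.ofReal (|cdfR μ y - cdfR ν y| * φ y) * ENNReal.ofReal (1 / φ y) := by
        rw [← ENNReal.ofReal_mul (by positivity), mul_assoc, mul_one_div_cancel hφ.ne', mul_one]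
    _ ≤ dphi φ μ ν * ENNReal.ofReal (1 / φ y) := by
        gcongr
        exact le_iSup (fun y => ENNReal.ofReal (|cdfR μ y - cdfR ν y| * φ y)) y

lemma ofReal_integral_abs_cdfR_sub_le_dphi_mul (μ ν : Measure ℝ) (hφ : ∀ y, 0 < φ y)
    (hφint : Integrable fun y => 1 / φ y) :
    ENNReal.ofReal (∫ y, |cdfR μ y - cdfR ν y|) ≤
      dphi φ μ ν * ENNReal.ofReal (∫ y, 1 / φ y) :=
  calc ENNReal.ofReal (∫ y, |cdfR μ y - cdfR ν y|)
      = ‖∫ y, |cdfR μ y - cdfR ν y|‖ₑ :=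
        (Real.enorm_of_nonneg (integral_nonneg fun _ => abs_nonneg _)).symm
    _ ≤ ∫⁻ y, ‖|cdfR μ y - cdfR ν y|‖ₑ := enorm_integral_le_lintegral_enorm _
    _ = ∫⁻ y, ENNReal.ofReal |cdfR μ y - cdfR ν y| := by
        simp_rw [Real.enorm_of_nonneg (abs_nonneg _)]
    _ ≤ ∫⁻ y, dphi φ μ ν * ENNReal.ofReal (1 / φ y) :=
        lintegral_mono fun y => ofReal_abs_cdfR_sub_le_dphi_mul μ ν (hφ y)
    _ = dphi φ μ ν * ENNReal.ofReal (∫ y, 1 / φ y) := by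
        rw [lintegral_const_mul'' _ hφint.aemeasurable.ennreal_ofReal,
          ofReal_integral_eq_lintegral_ofReal hφint
            (.of_forall fun y => (one_div_pos.2 (hφ y)).le)]

lemma ofReal_abs_integral_id_sub_le_dphi_mul {μ ν : Measure ℝ} [IsFiniteMeasure μ]
    [IsFiniteMeasure ν] (hmass : μ Set.univ = ν Set.univ)
    (hμ : Integrable (fun x : ℝ => x) μ) (hν : Integrable (fun x : ℝ => x) ν)
    (hφ : ∀ y, 0 < φ y) (hφint : Integrable fun y => 1 / φ y) :
    ENNReal.ofReal |(∫ x, x ∂μ) - ∫ x, x ∂ν| ≤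
      dphi φ μ ν * ENNReal.ofReal (∫ y, 1 / φ y) :=
  (ENNReal.ofReal_le_ofReal (abs_integral_id_sub_le_integral_abs_cdfR_sub hmass hμ hν)).trans
    (ofReal_integral_abs_cdfR_sub_le_dphi_mul μ ν hφ hφint)

end Weight

theorem mean_functional_kolmogorov_phi_general
    {μ ν : Measure ℝ} [IsFiniteMeasure μ] [IsFiniteMeasure ν] (hmass : μ Set.univ = ν Set.univ)
    (hμ : Integrable (fun y : ℝ => y) μ) (hν : Integrable (fun y : ℝ => y) ν)
    {φ : ℝ → ℝ} (hφ : ∀ y, 0 < φ y) (hφint : Integrable fun y => 1 / φ y) :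
    |(∫ y, y ∂μ) - ∫ y, y ∂ν| ≤ ∫ y, |cdfR μ y - cdfR ν y| ∧
    ENNReal.ofReal |(∫ y, y ∂μ) - ∫ y, y ∂ν| ≤
      dphi φ μ ν * ENNReal.ofReal (∫ y, 1 / φ y) ∧
    ∀ ε : ℝ, 0 < ε → ∃ δ : ℝ, 0 < δ ∧ ∀ ν' : Measure ℝ, IsFiniteMeasure ν' →
      μ Set.univ = ν' Set.univ → Integrable (fun y : ℝ => y) ν' →
      dphi φ μ ν' ≤ ENNReal.ofReal δ → |(∫ y, y ∂μ) - ∫ y, y ∂ν'| ≤ ε := by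
  refine ⟨abs_integral_id_sub_le_integral_abs_cdfR_sub hmass hμ hν,
    ofReal_abs_integral_id_sub_le_dphi_mul hmass hμ hν hφ hφint, fun ε hε => ?_⟩
  obtain ⟨δ, hδ, hδε⟩ := exists_pos_mul_lt hε (∫ y, 1 / φ y)
  refine ⟨δ, hδ, fun ν' _ hmass' hν' hdist => (ENNReal.ofReal_le_ofReal_iff hε.le).1 ?_⟩
  calc ENNReal.ofReal |(∫ y, y ∂μ) - ∫ y, y ∂ν'|
      ≤ dphi φ μ ν' * ENNReal.ofReal (∫ y, 1 / φ y) :=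
        ofReal_abs_integral_id_sub_le_dphi_mul hmass' hμ hν' hφ hφint
    _ ≤ ENNReal.ofReal δ * ENNReal.ofReal (∫ y, 1 / φ y) := by gcongr
    _ = ENNReal.ofReal ((∫ y, 1 / φ y) * δ) := by rw [← ENNReal.ofReal_mul hδ.le, mul_comm]
    _ ≤ ENNReal.ofReal ε := ENNReal.ofReal_le_ofReal hδε.le

/-- **Continuity of the mean functional w.r.t. `d_(φ)`** (Example 3.4 (ii)): for probability
measures with finite first moments, `|∫y dμ − ∫y dν| ≤ ∫|F_μ − F_ν| dy`; hence if `1/φ` is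
integrable, `|∫y dμ − ∫y dν| ≤ d_(φ)(μ,ν) ∫ 1/φ dy` for `μ, ν ∈ 𝓜₁^(φ)(ℝ)`, and the mean
functional is continuous w.r.t. `d_(φ)`. -/
theorem mean_functional_kolmogorov_phi
    (μ ν : Measure ℝ) [IsProbabilityMeasure μ] [IsProbabilityMeasure ν]
    (hμint : Integrable (fun y : ℝ => y) μ) (hνint : Integrable (fun y : ℝ => y) ν)
    (φ : ℝ → ℝ) (hφc : Continuous φ) (hφ1 : ∀ y : ℝ, 1 ≤ φ y)
    (hφdec : AntitoneOn φ (Set.Iio 0)) (hφinc : MonotoneOn φ (Set.Ioi 0))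
    (hφint : Integrable (fun y : ℝ => 1 / φ y))
    (hμφ : dphi φ μ (Measure.dirac 0) ≠ ⊤) (hνφ : dphi φ ν (Measure.dirac 0) ≠ ⊤) :
    |(∫ y, y ∂μ) - ∫ y, y ∂ν| ≤ (∫ y : ℝ, |cdfR μ y - cdfR ν y|) ∧
    ENNReal.ofReal |(∫ y, y ∂μ) - ∫ y, y ∂ν| ≤
      dphi φ μ ν * ENNReal.ofReal (∫ y : ℝ, 1 / φ y) ∧
    ∀ ε : ℝ, 0 < ε → ∃ δ : ℝ, 0 < δ ∧ ∀ ν' : Measure ℝ, IsProbabilityMeasure ν' →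
      Integrable (fun y : ℝ => y) ν' → dphi φ ν' (Measure.dirac 0) ≠ ⊤ →
      dphi φ μ ν' ≤ ENNReal.ofReal δ → |(∫ y, y ∂μ) - ∫ y, y ∂ν'| ≤ ε := by
  have ⟨hcdf, hdphi, hcont⟩ := mean_functional_kolmogorov_phi_general (by simp) hμint hνint
    (fun y => one_pos.trans_le (hφ1 y)) hφint
  exact ⟨hcdf, hdphi, fun ε hε => (hcont ε hε).imp fun δ ⟨hδ, hclose⟩ =>
    ⟨hδ, fun ν' _ hν'int _ => hclose ν' inferInstance (by simp) hν'int⟩⟩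
end

section
/- Let μ, ν be probability measures on ℝ with finite second moments and distribution functions F_μ, F_ν. Then |∫ y² μ(dy) − ∫ y² ν(dy)| ≤ 2 ∫_ℝ |F_μ(y) − F_ν(y)| |y| dy. Consequently, if φ is a u-shaped function with ∫_ℝ |y|/φ(y) dy < ∞, then for all μ, ν ∈ 𝓜₁^(φ)(ℝ) with finite second moments: |∫ y² μ(dy) − ∫ y² ν(dy)| ≤ 2 d_(φ)(μ,ν) · ∫_ℝ |y|/φ(y) dy; in particular the second moment functional T⁽²⁾(μ) := ∫ y² μ(dy) is continuous on 𝓜₁^(φ)(ℝ) w.r.t. d_(φ). -/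
open MeasureTheory Filter Topology

/-!
For Dirac measures, `F_{δ_a} - F_{δ_b}` is the signed indicator of the interval from `a` to `b`, so
integrating it against `g` gives `∫ y in a..b, g y`. Averaging over `b` with respect to `μ` (Fubini)
yields `∫ x, (∫ y in a..x, g y) ∂μ = ∫ y, (F_{δ_a} y - F_μ y) • g y`, and the Dirac term cancels on
subtracting the same identity for `ν`. The second moment is the case `g y = 2 * y`, `a = 0`, and the
bound by `d_(φ)` comes from `|F_μ - F_ν| * |y| = (|F_μ - F_ν| * φ) * (|y| / φ)`.
-/

section Dirac

lemma cdfR_dirac (a y : ℝ) : cdfR (Measure.dirac a) y = (Set.Iic y).indicator 1 a := by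
  by_cases h : a ≤ y <;> simp [cdfR, h]

lemma antitone_cdfR_dirac (y : ℝ) : Antitone fun a => cdfR (Measure.dirac a) y := by
  intro a b hab
  by_cases hb : b ≤ y
  · simp [cdfR_dirac, hb, hab.trans hb]
  · simp only [cdfR_dirac, Set.indicator_of_notMem (Set.notMem_Iic.2 (lt_of_not_ge hb))]
    exact Set.indicator_nonneg (fun _ _ => zero_le_one) a

lemma measurable_cdfR_dirac : Measurable fun p : ℝ × ℝ => cdfR (Measure.dirac p.1) p.2 := by
  simp only [cdfR_dirac, Set.indicator_apply, Set.mem_Iic]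
  exact Measurable.ite (measurableSet_le measurable_fst measurable_snd)
    measurable_const measurable_const

lemma integrable_cdfR_dirac (μ : Measure ℝ) [IsFiniteMeasure μ] (y : ℝ) :
    Integrable (fun x => cdfR (Measure.dirac x) y) μ := by
  simp only [cdfR_dirac]
  exact (integrable_const 1).indicator measurableSet_Iic

lemma integral_cdfR_dirac (μ : Measure ℝ) (y : ℝ) :
    ∫ x, cdfR (Measure.dirac x) y ∂μ = cdfR μ y := by
  simp only [cdfR_dirac]
  exact integral_indicator_one measurableSet_Iic

end Dirac

section Primitive

variable {E : Type*} [NormedAddCommGroup E] {a b : ℝ} {g : ℝ → E}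

lemma integrable_indicator_Ico {ρ : Measure ℝ} [NullSingletonClass ρ]
    (hg : IntervalIntegrable g ρ a b) :
    Integrable ((Set.Ico a b).indicator g) ρ :=
  (integrable_indicator_iff measurableSet_Ico).2 (hg.1.congr_set_ae Ico_ae_eq_Ioc)

lemma intervalIntegrable_of_locallyIntegrable {ρ : Measure ℝ} (hg : LocallyIntegrable g ρ)
    (a b : ℝ) : IntervalIntegrable g ρ a b :=
  (hg.integrableOn_isCompact isCompact_uIcc).intervalIntegrable

variable [NormedSpace ℝ E]

lemma cdfR_dirac_sub_cdfR_dirac_smul_eq_indicator_sub (a b : ℝ) (g : ℝ → E) (y : ℝ) :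
    (cdfR (Measure.dirac a) y - cdfR (Measure.dirac b) y) • g y =
      (Set.Ico a b).indicator g y - (Set.Ico b a).indicator g y := by
  by_cases ha : a ≤ y <;> by_cases hb : b ≤ y <;>
    simp [cdfR_dirac, ha, hb, lt_of_not_ge]

lemma integrable_cdfR_dirac_sub_cdfR_dirac_smul (hg : IntervalIntegrable g volume a b) :
    Integrable fun y => (cdfR (Measure.dirac a) y - cdfR (Measure.dirac b) y) • g y := by
  simp only [cdfR_dirac_sub_cdfR_dirac_smul_eq_indicator_sub]
  exact (integrable_indicator_Ico hg).sub (integrable_indicator_Ico hg.symm)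

lemma integral_cdfR_dirac_sub_cdfR_dirac_smul (hg : IntervalIntegrable g volume a b) :
    ∫ y, (cdfR (Measure.dirac a) y - cdfR (Measure.dirac b) y) • g y = ∫ y in a..b, g y := by
  simp only [cdfR_dirac_sub_cdfR_dirac_smul_eq_indicator_sub]
  rw [integral_sub (integrable_indicator_Ico hg) (integrable_indicator_Ico hg.symm),
    integral_indicator measurableSet_Ico, integral_indicator measurableSet_Ico,
    integral_Ico_eq_integral_Ioc, integral_Ico_eq_integral_Ioc, intervalIntegral]

lemma integral_norm_cdfR_dirac_sub_cdfR_dirac_smul (hg : IntervalIntegrable g volume a b) :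
    ∫ y, ‖(cdfR (Measure.dirac a) y - cdfR (Measure.dirac b) y) • g y‖ =
      |∫ y in a..b, ‖g y‖| := by
  wlog hab : a ≤ b generalizing a b
  · rw [intervalIntegral.integral_symm, abs_neg, ← this hg.symm (le_of_not_ge hab)]
    simp only [norm_smul, norm_sub_rev]
  rw [abs_of_nonneg (intervalIntegral.integral_nonneg_of_forall hab fun _ => norm_nonneg _),
    ← integral_cdfR_dirac_sub_cdfR_dirac_smul hg.norm]
  refine integral_congr_ae (ae_of_all _ fun y => ?_)
  simp only [norm_smul, smul_eq_mul, Real.norm_of_nonneg (sub_nonneg.2 (antitone_cdfR_dirac y hab))]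

lemma integrable_prod_cdfR_dirac_sub_cdfR_dirac_smul {μ : Measure ℝ}
    (hg : LocallyIntegrable g) (hμ : Integrable (fun x => ∫ y in a..x, ‖g y‖) μ) :
    Integrable (Function.uncurry fun x y =>
      (cdfR (Measure.dirac a) y - cdfR (Measure.dirac x) y) • g y) (μ.prod volume) := by
  have hgi := intervalIntegrable_of_locallyIntegrable hg a
  have hmeas : Measurable fun p : ℝ × ℝ =>
      cdfR (Measure.dirac a) p.2 - cdfR (Measure.dirac p.1) p.2 :=
    (measurable_cdfR_dirac.comp (measurable_const.prodMk measurable_snd)).sub measurable_cdfR_dirac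
  refine (integrable_prod_iff
    (hmeas.aestronglyMeasurable.smul hg.aestronglyMeasurable.comp_snd)).2 ⟨?_, ?_⟩
  · exact ae_of_all _ fun x => integrable_cdfR_dirac_sub_cdfR_dirac_smul (hgi x)
  · exact hμ.abs.congr (ae_of_all _ fun x =>
      (integral_norm_cdfR_dirac_sub_cdfR_dirac_smul (hgi x)).symm)

lemma enorm_cdfR_sub_smul_le_dphi_mul {φ : ℝ → ℝ} {y : ℝ} (hφ : 0 < φ y) (μ ν : Measure ℝ) (v : E) :
    ‖(cdfR ν y - cdfR μ y) • v‖ₑ ≤ dphi φ μ ν * ENNReal.ofReal (‖v‖ / φ y) := by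
  calc ‖(cdfR ν y - cdfR μ y) • v‖ₑ
      = ENNReal.ofReal (|cdfR μ y - cdfR ν y| * φ y * (‖v‖ / φ y)) := by
        rw [← ofReal_norm, norm_smul, Real.norm_eq_abs, abs_sub_comm, mul_assoc,
          mul_div_cancel₀ _ hφ.ne']
    _ = ENNReal.ofReal (|cdfR μ y - cdfR ν y| * φ y) * ENNReal.ofReal (‖v‖ / φ y) :=
        ENNReal.ofReal_mul (by positivity)
    _ ≤ dphi φ μ ν * ENNReal.ofReal (‖v‖ / φ y) := by
        gcongr
        exact le_iSup (fun y => ENNReal.ofReal (|cdfR μ y - cdfR ν y| * φ y)) y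

variable [CompleteSpace E] {μ ν : Measure ℝ} [IsProbabilityMeasure μ] [IsProbabilityMeasure ν]

lemma integral_cdfR_dirac_sub_cdfR_dirac_smul_const (a y : ℝ) (v : E) :
    ∫ x, (cdfR (Measure.dirac a) y - cdfR (Measure.dirac x) y) • v ∂μ =
      (cdfR (Measure.dirac a) y - cdfR μ y) • v := by
  rw [integral_smul_const, integral_sub (integrable_const _) (integrable_cdfR_dirac μ y),
    integral_const, integral_cdfR_dirac, probReal_univ, one_smul]

lemma integrable_cdfR_dirac_sub_cdfR_smul (hg : LocallyIntegrable g)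
    (hμ : Integrable (fun x => ∫ y in a..x, ‖g y‖) μ) :
    Integrable fun y => (cdfR (Measure.dirac a) y - cdfR μ y) • g y := by
  simpa only [Function.uncurry, integral_cdfR_dirac_sub_cdfR_dirac_smul_const] using
    (integrable_prod_cdfR_dirac_sub_cdfR_dirac_smul hg hμ).integral_prod_right

theorem integral_primitive_eq_integral_cdfR_smul (hg : LocallyIntegrable g)
    (hμ : Integrable (fun x => ∫ y in a..x, ‖g y‖) μ) :
    ∫ x, (∫ y in a..x, g y) ∂μ = ∫ y, (cdfR (Measure.dirac a) y - cdfR μ y) • g y := by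
  have hgi := intervalIntegrable_of_locallyIntegrable hg a
  simpa only [integral_cdfR_dirac_sub_cdfR_dirac_smul (hgi _),
    integral_cdfR_dirac_sub_cdfR_dirac_smul_const] using
    integral_integral_swap (integrable_prod_cdfR_dirac_sub_cdfR_dirac_smul hg hμ)

theorem integral_primitive_sub_integral_primitive (hg : LocallyIntegrable g)
    (hμ : Integrable (fun x => ∫ y in a..x, ‖g y‖) μ)
    (hν : Integrable (fun x => ∫ y in a..x, ‖g y‖) ν) :
    (∫ x, (∫ y in a..x, g y) ∂μ) - ∫ x, (∫ y in a..x, g y) ∂ν =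
      ∫ y, (cdfR ν y - cdfR μ y) • g y := by
  rw [integral_primitive_eq_integral_cdfR_smul hg hμ,
    integral_primitive_eq_integral_cdfR_smul hg hν,
    ← integral_sub (integrable_cdfR_dirac_sub_cdfR_smul hg hμ)
      (integrable_cdfR_dirac_sub_cdfR_smul hg hν)]
  simp only [← sub_smul, sub_sub_sub_cancel_left]

theorem norm_integral_primitive_sub_le (hg : LocallyIntegrable g)
    (hμ : Integrable (fun x => ∫ y in a..x, ‖g y‖) μ)
    (hν : Integrable (fun x => ∫ y in a..x, ‖g y‖) ν) :
    ‖(∫ x, (∫ y in a..x, g y) ∂μ) - ∫ x, (∫ y in a..x, g y) ∂ν‖ ≤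
      ∫ y, |cdfR μ y - cdfR ν y| * ‖g y‖ := by
  rw [integral_primitive_sub_integral_primitive hg hμ hν]
  refine (norm_integral_le_integral_norm _).trans_eq ?_
  simp only [norm_smul, Real.norm_eq_abs, abs_sub_comm]

theorem enorm_integral_primitive_sub_le_dphi_mul {φ : ℝ → ℝ} (hφ : ∀ y, 0 < φ y)
    (hg : LocallyIntegrable g) (hgφ : Integrable fun y => ‖g y‖ / φ y)
    (hμ : Integrable (fun x => ∫ y in a..x, ‖g y‖) μ)
    (hν : Integrable (fun x => ∫ y in a..x, ‖g y‖) ν) :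
    ‖(∫ x, (∫ y in a..x, g y) ∂μ) - ∫ x, (∫ y in a..x, g y) ∂ν‖ₑ ≤
      dphi φ μ ν * ENNReal.ofReal (∫ y, ‖g y‖ / φ y) := by
  calc ‖(∫ x, (∫ y in a..x, g y) ∂μ) - ∫ x, (∫ y in a..x, g y) ∂ν‖ₑ
      = ‖∫ y, (cdfR ν y - cdfR μ y) • g y‖ₑ := by
        rw [integral_primitive_sub_integral_primitive hg hμ hν]
    _ ≤ ∫⁻ y, ‖(cdfR ν y - cdfR μ y) • g y‖ₑ := enorm_integral_le_lintegral_enorm _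
    _ ≤ ∫⁻ y, dphi φ μ ν * ENNReal.ofReal (‖g y‖ / φ y) :=
        lintegral_mono fun y => enorm_cdfR_sub_smul_le_dphi_mul (hφ y) μ ν (g y)
    _ = dphi φ μ ν * ENNReal.ofReal (∫ y, ‖g y‖ / φ y) := by
        rw [lintegral_const_mul'' _ hgφ.aemeasurable.ennreal_ofReal,
          ofReal_integral_eq_lintegral_ofReal hgφ
            (ae_of_all _ fun y => div_nonneg (norm_nonneg _) (hφ y).le)]

end Primitive

section SecondMoment

lemma intervalIntegral_two_mul (x : ℝ) : ∫ y in (0 : ℝ)..x, 2 * y = x ^ 2 := by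
  rw [intervalIntegral.integral_const_mul, integral_id]
  ring

lemma intervalIntegral_norm_two_mul (x : ℝ) : ∫ y in (0 : ℝ)..x, ‖2 * y‖ = x * |x| := by
  rcases le_total 0 x with hx | hx
  · have hcongr : Set.EqOn (fun y : ℝ => ‖2 * y‖) (fun y => 2 * y) (Set.uIcc 0 x) := fun y hy =>
      Real.norm_of_nonneg (mul_nonneg zero_le_two (Set.uIcc_of_le hx ▸ hy).1)
    rw [intervalIntegral.integral_congr hcongr, intervalIntegral_two_mul, abs_of_nonneg hx, sq]
  · have hcongr : Set.EqOn (fun y : ℝ => ‖2 * y‖) (fun y => -(2 * y)) (Set.uIcc 0 x) := fun y hy =>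
      Real.norm_of_nonpos
        (mul_nonpos_of_nonneg_of_nonpos zero_le_two (Set.uIcc_of_ge hx ▸ hy).2)
    rw [intervalIntegral.integral_congr hcongr, intervalIntegral.integral_neg,
      intervalIntegral_two_mul, abs_of_nonpos hx, sq, mul_neg]

lemma integrable_intervalIntegral_norm_two_mul {μ : Measure ℝ}
    (hμ : Integrable (fun y : ℝ => y ^ 2) μ) :
    Integrable (fun x => ∫ y in (0 : ℝ)..x, ‖2 * y‖) μ := by
  simp only [intervalIntegral_norm_two_mul]
  refine hμ.mono (by fun_prop) (ae_of_all _ fun x => ?_)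
  simp [sq]

lemma locallyIntegrable_two_mul : LocallyIntegrable fun y : ℝ => 2 * y :=
  (continuous_const_mul 2).locallyIntegrable

variable {μ ν : Measure ℝ} [IsProbabilityMeasure μ] [IsProbabilityMeasure ν]

theorem abs_secondMoment_sub_le (hμ : Integrable (fun y : ℝ => y ^ 2) μ)
    (hν : Integrable (fun y : ℝ => y ^ 2) ν) :
    |(∫ y, y ^ 2 ∂μ) - ∫ y, y ^ 2 ∂ν| ≤ 2 * ∫ y, |cdfR μ y - cdfR ν y| * |y| := by
  simpa only [intervalIntegral_two_mul, norm_mul, Real.norm_ofNat, Real.norm_eq_abs,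
    mul_left_comm _ (2 : ℝ), integral_const_mul] using
    norm_integral_primitive_sub_le locallyIntegrable_two_mul
      (integrable_intervalIntegral_norm_two_mul hμ) (integrable_intervalIntegral_norm_two_mul hν)

theorem ofReal_abs_secondMoment_sub_le_dphi_mul {φ : ℝ → ℝ} (hφ : ∀ y, 0 < φ y)
    (hφint : Integrable fun y : ℝ => |y| / φ y) (hμ : Integrable (fun y : ℝ => y ^ 2) μ)
    (hν : Integrable (fun y : ℝ => y ^ 2) ν) :
    ENNReal.ofReal |(∫ y, y ^ 2 ∂μ) - ∫ y, y ^ 2 ∂ν| ≤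
      2 * dphi φ μ ν * ENNReal.ofReal (∫ y, |y| / φ y) := by
  have hweight (y : ℝ) : ‖2 * y‖ / φ y = 2 * (|y| / φ y) := by
    rw [norm_mul, Real.norm_ofNat, Real.norm_eq_abs, mul_div_assoc]
  have hbound := enorm_integral_primitive_sub_le_dphi_mul hφ locallyIntegrable_two_mul
    (by simpa only [hweight] using hφint.const_mul 2)
    (integrable_intervalIntegral_norm_two_mul hμ) (integrable_intervalIntegral_norm_two_mul hν)
  simp only [intervalIntegral_two_mul, hweight, integral_const_mul,
    ENNReal.ofReal_mul zero_le_two, ENNReal.ofReal_ofNat, Real.enorm_eq_ofReal_abs] at hbound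
  rwa [mul_comm 2, mul_assoc]

theorem exists_dphi_le_imp_abs_secondMoment_sub_le {φ : ℝ → ℝ} (hφ : ∀ y, 0 < φ y)
    (hφint : Integrable fun y : ℝ => |y| / φ y) (hμ : Integrable (fun y : ℝ => y ^ 2) μ)
    {ε : ℝ} (hε : 0 < ε) :
    ∃ δ : ℝ, 0 < δ ∧ ∀ ν : Measure ℝ, IsProbabilityMeasure ν → Integrable (fun y : ℝ => y ^ 2) ν →
      dphi φ μ ν ≤ ENNReal.ofReal δ → |(∫ y, y ^ 2 ∂μ) - ∫ y, y ^ 2 ∂ν| ≤ ε := by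
  have hint : 0 ≤ ∫ y, |y| / φ y :=
    integral_nonneg fun y => div_nonneg (abs_nonneg y) (hφ y).le
  obtain ⟨δ, hδ, hδε⟩ := exists_pos_mul_lt hε (2 * ∫ y, |y| / φ y)
  refine ⟨δ, hδ, fun ν _ hν hdist => (ENNReal.ofReal_le_ofReal_iff hε.le).1 ?_⟩
  calc ENNReal.ofReal |(∫ y, y ^ 2 ∂μ) - ∫ y, y ^ 2 ∂ν|
      ≤ 2 * dphi φ μ ν * ENNReal.ofReal (∫ y, |y| / φ y) :=
        ofReal_abs_secondMoment_sub_le_dphi_mul hφ hφint hμ hν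
    _ ≤ 2 * ENNReal.ofReal δ * ENNReal.ofReal (∫ y, |y| / φ y) := by gcongr
    _ = ENNReal.ofReal (2 * (∫ y, |y| / φ y) * δ) := by
        rw [mul_right_comm 2, ENNReal.ofReal_mul (by positivity), ENNReal.ofReal_mul zero_le_two,
          ENNReal.ofReal_ofNat]
    _ ≤ ENNReal.ofReal ε := ENNReal.ofReal_le_ofReal hδε.le

end SecondMoment

theorem second_moment_functional_kolmogorov_phi_general
    (μ ν : Measure ℝ) [IsProbabilityMeasure μ] [IsProbabilityMeasure ν]
    (hμint : Integrable (fun y : ℝ => y ^ 2) μ) (hνint : Integrable (fun y : ℝ => y ^ 2) ν)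
    (φ : ℝ → ℝ) (hφ : ∀ y : ℝ, 0 < φ y) (hφint : Integrable (fun y : ℝ => |y| / φ y)) :
    |(∫ y, y ^ 2 ∂μ) - ∫ y, y ^ 2 ∂ν| ≤ 2 * (∫ y : ℝ, |cdfR μ y - cdfR ν y| * |y|) ∧
    ENNReal.ofReal |(∫ y, y ^ 2 ∂μ) - ∫ y, y ^ 2 ∂ν| ≤
      2 * dphi φ μ ν * ENNReal.ofReal (∫ y : ℝ, |y| / φ y) ∧
    ∀ ε : ℝ, 0 < ε → ∃ δ : ℝ, 0 < δ ∧ ∀ ν' : Measure ℝ, IsProbabilityMeasure ν' →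
      Integrable (fun y : ℝ => y ^ 2) ν' →
      dphi φ μ ν' ≤ ENNReal.ofReal δ → |(∫ y, y ^ 2 ∂μ) - ∫ y, y ^ 2 ∂ν'| ≤ ε :=
  ⟨abs_secondMoment_sub_le hμint hνint,
    ofReal_abs_secondMoment_sub_le_dphi_mul hφ hφint hμint hνint,
    fun _ hε => exists_dphi_le_imp_abs_secondMoment_sub_le hφ hφint hμint hε⟩

/-- **Continuity of the second moment functional w.r.t. `d_(φ)`** (Example 3.4 (iii)): for
probability measures with finite second moments,
`|∫y² dμ − ∫y² dν| ≤ 2 ∫|F_μ − F_ν| |y| dy`; hence if `|y|/φ(y)` is integrable,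
`|∫y² dμ − ∫y² dν| ≤ 2 d_(φ)(μ,ν) ∫ |y|/φ(y) dy` for `μ, ν ∈ 𝓜₁^(φ)(ℝ)`, and the second
moment functional is continuous w.r.t. `d_(φ)`. -/
theorem second_moment_functional_kolmogorov_phi
    (μ ν : Measure ℝ) [IsProbabilityMeasure μ] [IsProbabilityMeasure ν]
    (hμint : Integrable (fun y : ℝ => y ^ 2) μ) (hνint : Integrable (fun y : ℝ => y ^ 2) ν)
    (φ : ℝ → ℝ) (hφc : Continuous φ) (hφ1 : ∀ y : ℝ, 1 ≤ φ y)
    (hφdec : AntitoneOn φ (Set.Iio 0)) (hφinc : MonotoneOn φ (Set.Ioi 0))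
    (hφint : Integrable (fun y : ℝ => |y| / φ y))
    (hμφ : dphi φ μ (Measure.dirac 0) ≠ ⊤) (hνφ : dphi φ ν (Measure.dirac 0) ≠ ⊤) :
    |(∫ y, y ^ 2 ∂μ) - ∫ y, y ^ 2 ∂ν| ≤ 2 * (∫ y : ℝ, |cdfR μ y - cdfR ν y| * |y|) ∧
    ENNReal.ofReal |(∫ y, y ^ 2 ∂μ) - ∫ y, y ^ 2 ∂ν| ≤
      2 * dphi φ μ ν * ENNReal.ofReal (∫ y : ℝ, |y| / φ y) ∧
    ∀ ε : ℝ, 0 < ε → ∃ δ : ℝ, 0 < δ ∧ ∀ ν' : Measure ℝ, IsProbabilityMeasure ν' →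
      Integrable (fun y : ℝ => y ^ 2) ν' → dphi φ ν' (Measure.dirac 0) ≠ ⊤ →
      dphi φ μ ν' ≤ ENNReal.ofReal δ → |(∫ y, y ^ 2 ∂μ) - ∫ y, y ^ 2 ∂ν'| ≤ ε := by
  obtain ⟨hcdf, hdphi, hcont⟩ := second_moment_functional_kolmogorov_phi_general μ ν hμint hνint φ
    (fun y => zero_lt_one.trans_le (hφ1 y)) hφint
  exact ⟨hcdf, hdphi, fun ε hε => (hcont ε hε).imp fun _ h =>
    ⟨h.1, fun ν' hν' hint _ => h.2 ν' hν' hint⟩⟩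
end

section
/- Fix 0 < c < 1. For real numbers φ₁, θ₁ with |φ₁|, |θ₁| ≤ c and φ₁ ≠ −θ₁, let a(φ₁,θ₁) = (a_s(φ₁,θ₁))_{s∈ℕ₀} be given by a₀ = 1 and a_s = (φ₁+θ₁)φ₁^{s−1} for s ≥ 1 (the MA(∞) coefficients of the ARMA(1,1) process with these parameters), and let b_s(a) denote the coefficient of z^s in the power series expansion of z ↦ 1/∑_{s=0}^∞ a_s z^s. Let A'_c := {a(φ₁,θ₁) : |φ₁|,|θ₁| ≤ c, φ₁ ≠ −θ₁}. Then: (i) ∑_{s=0}^∞ a_s z^s ≠ 0 for all complex z with |z| ≤ 1, for every a ∈ A'_c; (ii) sup_{a∈A'_c} ∑_{u=n}^∞ ∑_{s=u}^∞ |a_s| ≤ (2/(1−c)²) c^n for all n ∈ ℕ; (iii) sup_{a∈A'_c} ∑_{s=0}^∞ |b_s(a)| ≤ 1 + 2c/(1−c). -/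
open Filter Topology

/-- The MA(∞) coefficient sequence of the ARMA(1,1) process with parameters `φ₁, θ₁`:
`a₀ = 1` and `a_s = (φ₁+θ₁) φ₁^{s−1}` for `s ≥ 1`. -/
noncomputable def armaCoeff (φ₁ θ₁ : ℝ) : ℕ → ℝ :=
  fun s => if s = 0 then 1 else (φ₁ + θ₁) * φ₁ ^ (s - 1)

/-!
The generating function of `armaCoeff φ θ` is `(1 + θ z) / (1 - φ z)`. It has no zero in the closed
unit disc when `|θ| < 1`, and its reciprocal `(1 - φ z) / (1 + θ z)` is of the same form: it
generates `armaCoeff (-θ) (-φ)`. Hence one geometric bound, `|a_s| ≤ 2 c ^ s`, controls both the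
coefficients and those of the reciprocal series.
-/

theorem powerSeries_mk_mul_mk_eq_one {R : Type*} [Semiring R] {a b : ℕ → R}
    (h : ∀ n, ∑ i ∈ Finset.range (n + 1), a i * b (n - i) = if n = 0 then 1 else 0) :
    PowerSeries.mk a * PowerSeries.mk b = 1 := by
  ext n
  simp only [PowerSeries.coeff_mul, PowerSeries.coeff_mk, PowerSeries.coeff_one, ← h n]
  exact Finset.Nat.sum_antidiagonal_eq_sum_range_succ (fun i j ↦ a i * b j) n

section Geometric

variable {f : ℕ → ℝ} {r C : ℝ}

theorem summable_of_le_geometric (hr0 : 0 ≤ r) (hr1 : r < 1) (hf : ∀ n, 0 ≤ f n)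
    (hfr : ∀ n, f n ≤ C * r ^ n) : Summable f :=
  .of_nonneg_of_le hf hfr ((summable_geometric_of_lt_one hr0 hr1).mul_left C)

theorem tsum_le_of_le_geometric (hr0 : 0 ≤ r) (hr1 : r < 1) (hf : ∀ n, 0 ≤ f n)
    (hfr : ∀ n, f n ≤ C * r ^ n) : ∑' n, f n ≤ C / (1 - r) :=
  hasSum_le hfr (summable_of_le_geometric hr0 hr1 hf hfr).hasSum
    ((hasSum_geometric_of_lt_one hr0 hr1).mul_left C)

theorem tsum_nat_add_le_of_le_geometric (hr0 : 0 ≤ r) (hr1 : r < 1) (hf : ∀ n, 0 ≤ f n)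
    (hfr : ∀ n, f n ≤ C * r ^ n) (m : ℕ) : ∑' s, f (m + s) ≤ C * r ^ m / (1 - r) :=
  tsum_le_of_le_geometric hr0 hr1 (fun s ↦ hf (m + s)) fun s ↦
    (hfr (m + s)).trans_eq (by rw [pow_add, mul_assoc])

theorem tsum_tsum_nat_add_le_of_le_geometric (hr0 : 0 ≤ r) (hr1 : r < 1) (hf : ∀ n, 0 ≤ f n)
    (hfr : ∀ n, f n ≤ C * r ^ n) (n : ℕ) :
    ∑' u, ∑' s, f (n + u + s) ≤ C / (1 - r) ^ 2 * r ^ n := by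
  have tail_le (u : ℕ) : ∑' s, f (n + u + s) ≤ C * r ^ n / (1 - r) * r ^ u :=
    (tsum_nat_add_le_of_le_geometric hr0 hr1 hf hfr (n + u)).trans_eq (by ring)
  calc ∑' u, ∑' s, f (n + u + s) ≤ C * r ^ n / (1 - r) / (1 - r) :=
        tsum_le_of_le_geometric hr0 hr1 (fun u ↦ tsum_nonneg fun s ↦ hf (n + u + s)) tail_le
    _ = C / (1 - r) ^ 2 * r ^ n := by rw [div_div, ← sq, mul_div_right_comm]

end Geometric

theorem armaCoeff_zero (φ θ : ℝ) : armaCoeff φ θ 0 = 1 := rfl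

theorem armaCoeff_succ (φ θ : ℝ) (s : ℕ) : armaCoeff φ θ (s + 1) = (φ + θ) * φ ^ s := rfl

section GeneratingFunction

open PowerSeries

theorem mk_armaCoeff_mul_one_sub (φ θ : ℝ) :
    mk (armaCoeff φ θ) * (1 - C φ * X) = 1 + C θ * X := by
  ext n
  rw [mul_sub, mul_one, mul_left_comm]
  rcases n with _ | _ | n
  · simp [armaCoeff_zero]
  · simp [armaCoeff_zero, armaCoeff_succ, coeff_one, coeff_succ_mul_X]
  · simp only [map_sub, map_add, coeff_mk, coeff_C_mul, coeff_succ_mul_X, coeff_one, coeff_C,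
      armaCoeff_succ, Nat.add_eq_zero_iff, one_ne_zero, and_false, if_false]
    ring

theorem mk_armaCoeff_mul_mk_armaCoeff_neg (φ θ : ℝ) :
    mk (armaCoeff φ θ) * mk (armaCoeff (-θ) (-φ)) = 1 := by
  have one_sub_ne_zero (x : ℝ) : (1 - C x * X : ℝ⟦X⟧) ≠ 0 := fun h ↦ by
    simpa using congrArg constantCoeff h
  refine mul_right_cancel₀ (mul_ne_zero (one_sub_ne_zero φ) (one_sub_ne_zero (-θ))) ?_
  rw [mul_mul_mul_comm, mk_armaCoeff_mul_one_sub, mk_armaCoeff_mul_one_sub]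
  simp only [map_neg]
  ring

theorem eq_armaCoeff_of_mk_mul_mk_eq_one {φ θ : ℝ} {b : ℕ → ℝ}
    (hb : mk (armaCoeff φ θ) * mk b = 1) : b = armaCoeff (-θ) (-φ) := by
  have mk_eq : mk b = mk (armaCoeff (-θ) (-φ)) :=
    inv_unique hb (mk_armaCoeff_mul_mk_armaCoeff_neg φ θ)
  funext n
  simpa only [coeff_mk] using congrArg (coeff n) mk_eq

end GeneratingFunction

theorem hasSum_armaCoeff_mul_pow {φ : ℝ} (θ : ℝ) {z : ℂ} (hφz : ‖(φ : ℂ) * z‖ < 1) :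
    HasSum (fun s ↦ (armaCoeff φ θ s : ℂ) * z ^ s) ((1 + θ * z) / (1 - φ * z)) := by
  have denom_ne_zero : 1 - (φ : ℂ) * z ≠ 0 :=
    sub_ne_zero.2 fun h ↦ by simp [← h] at hφz
  have value_eq : (1 + θ * z) / (1 - φ * z) - 1 = (φ + θ) * z * (1 - φ * z)⁻¹ := by
    rw [div_sub_one denom_ne_zero, div_eq_mul_inv]
    ring
  have term_eq (s : ℕ) : (armaCoeff φ θ (s + 1) : ℂ) * z ^ (s + 1) =
      (φ + θ) * z * (φ * z) ^ s := by
    rw [armaCoeff_succ]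
    push_cast
    ring
  rw [← hasSum_nat_add_iff' 1, Finset.sum_range_one, armaCoeff_zero, Complex.ofReal_one, pow_zero,
    mul_one, value_eq]
  simpa only [term_eq] using (hasSum_geometric_of_norm_lt_one hφz).mul_left ((φ + θ) * z)

theorem tsum_armaCoeff_mul_pow_ne_zero {φ θ : ℝ} {z : ℂ} (hφ : |φ| < 1) (hθ : |θ| < 1)
    (hz : ‖z‖ ≤ 1) : ∑' s, (armaCoeff φ θ s : ℂ) * z ^ s ≠ 0 := by
  have norm_mul_lt_one {x : ℝ} (hx : |x| < 1) : ‖(x : ℂ) * z‖ < 1 := by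
    rw [norm_mul, Complex.norm_real, Real.norm_eq_abs]
    exact mul_lt_one_of_nonneg_of_lt_one_left (abs_nonneg x) hx hz
  rw [(hasSum_armaCoeff_mul_pow θ (norm_mul_lt_one hφ)).tsum_eq]
  refine div_ne_zero (fun h ↦ ?_) (fun h ↦ ?_)
  · simpa [eq_neg_of_add_eq_zero_right h] using norm_mul_lt_one hθ
  · simpa [← sub_eq_zero.1 h] using norm_mul_lt_one hφ

section Bounds

variable {c φ θ : ℝ}

theorem abs_armaCoeff_succ_le (hφ : |φ| ≤ c) (hθ : |θ| ≤ c) (s : ℕ) :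
    |armaCoeff φ θ (s + 1)| ≤ 2 * c * c ^ s := by
  have hc0 : 0 ≤ c := (abs_nonneg φ).trans hφ
  have abs_add_le_two_mul : |φ + θ| ≤ 2 * c := (abs_add_le φ θ).trans (by linarith)
  rw [armaCoeff_succ, abs_mul, abs_pow]
  gcongr

theorem abs_armaCoeff_le (hφ : |φ| ≤ c) (hθ : |θ| ≤ c) (s : ℕ) :
    |armaCoeff φ θ s| ≤ 2 * c ^ s := by
  cases s with
  | zero => norm_num [armaCoeff_zero]
  | succ s => exact (abs_armaCoeff_succ_le hφ hθ s).trans_eq (by ring)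

theorem summable_abs_armaCoeff (hc1 : c < 1) (hφ : |φ| ≤ c) (hθ : |θ| ≤ c) :
    Summable fun s ↦ |armaCoeff φ θ s| :=
  summable_of_le_geometric ((abs_nonneg φ).trans hφ) hc1 (fun _ ↦ abs_nonneg _)
    (abs_armaCoeff_le hφ hθ)

theorem tsum_abs_armaCoeff_le (hc1 : c < 1) (hφ : |φ| ≤ c) (hθ : |θ| ≤ c) :
    ∑' s, |armaCoeff φ θ s| ≤ 1 + 2 * c / (1 - c) := by
  rw [(summable_abs_armaCoeff hc1 hφ hθ).tsum_eq_zero_add, armaCoeff_zero, abs_one]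
  gcongr
  exact tsum_le_of_le_geometric ((abs_nonneg φ).trans hφ) hc1 (fun _ ↦ abs_nonneg _)
    (abs_armaCoeff_succ_le hφ hθ)

end Bounds

/-- **Uniform bounds for ARMA(1,1) coefficient classes** (Example 3.8): fix `0 < c < 1`
and let `A'_c` consist of the MA(∞) coefficient sequences of ARMA(1,1) processes with
`|φ₁|, |θ₁| ≤ c` and `φ₁ ≠ −θ₁`.  Then (i) the associated power series have no zero in the
closed unit disc, (ii) the double tail sums are bounded by `(2/(1−c)²) c^n`, uniformly over
`A'_c`, and (iii) the absolute sums of the reciprocal power series coefficients are bounded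
by `1 + 2c/(1−c)`, uniformly over `A'_c`. -/
theorem arma_class_uniform_bounds
    (c : ℝ) (hc0 : 0 < c) (hc1 : c < 1)
    -- the reciprocal power series coefficients b_s(a) for a ∈ A'_c
    (b : ℝ → ℝ → ℕ → ℝ)
    (hb : ∀ φ₁ θ₁ : ℝ, |φ₁| ≤ c → |θ₁| ≤ c → φ₁ ≠ -θ₁ → ∀ n : ℕ,
      (∑ i ∈ Finset.range (n + 1), armaCoeff φ₁ θ₁ i * b φ₁ θ₁ (n - i)) =
        if n = 0 then 1 else 0) :
    -- (i)
    (∀ φ₁ θ₁ : ℝ, |φ₁| ≤ c → |θ₁| ≤ c → φ₁ ≠ -θ₁ →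
      ∀ z : ℂ, ‖z‖ ≤ 1 → (∑' s : ℕ, (armaCoeff φ₁ θ₁ s : ℂ) * z ^ s) ≠ 0) ∧
    -- (ii)
    (∀ n : ℕ, 1 ≤ n → ∀ φ₁ θ₁ : ℝ, |φ₁| ≤ c → |θ₁| ≤ c → φ₁ ≠ -θ₁ →
      (∑' u : ℕ, ∑' s : ℕ, |armaCoeff φ₁ θ₁ (n + u + s)|) ≤ 2 / (1 - c) ^ 2 * c ^ n) ∧
    -- (iii)
    (∀ φ₁ θ₁ : ℝ, |φ₁| ≤ c → |θ₁| ≤ c → φ₁ ≠ -θ₁ →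
      Summable (fun s => |b φ₁ θ₁ s|) ∧ (∑' s : ℕ, |b φ₁ θ₁ s|) ≤ 1 + 2 * c / (1 - c)) := by
  refine ⟨fun φ₁ θ₁ hφ hθ _ z hz ↦ ?_, fun n _ φ₁ θ₁ hφ hθ _ ↦ ?_, fun φ₁ θ₁ hφ hθ hne ↦ ?_⟩
  · exact tsum_armaCoeff_mul_pow_ne_zero (hφ.trans_lt hc1) (hθ.trans_lt hc1) hz
  · exact tsum_tsum_nat_add_le_of_le_geometric hc0.le hc1 (fun s ↦ abs_nonneg _)
      (abs_armaCoeff_le hφ hθ) n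
  · have hφ' : |-φ₁| ≤ c := by rwa [abs_neg]
    have hθ' : |-θ₁| ≤ c := by rwa [abs_neg]
    rw [eq_armaCoeff_of_mk_mul_mk_eq_one
      (powerSeries_mk_mul_mk_eq_one (hb φ₁ θ₁ hφ hθ hne))]
    exact ⟨summable_abs_armaCoeff hc1 hθ' hφ', tsum_abs_armaCoeff_le hc1 hθ' hφ'⟩
end

section
/- Let φ : ℝ → [1,∞) be a u-shaped function and μ a probability measure on ℝ with distribution function F_μ and leftcontinuous quantile function F_μ^←. Define w(t) := φ(F_μ^←(t)) 1_{[0,F_μ(0)]}(t) for t ∈ [0,1], let w^→(y) := sup{s ∈ [0,1] : w(s) > y} (sup ∅ := 0) be its rightcontinuous inverse, and let φ^→(y) := sup{z ∈ (−∞,0] : φ(z) > y} (sup ∅ := 0) be the rightcontinuous inverse of the nonincreasing restriction of φ to (−∞,0]. Then w^→(y) ≤ F_μ(φ^→(y)) for every y ∈ (0,∞), and for every K > 0: ∫_K^∞ w^→(y) dy ≤ ∫_{(−∞,0]} φ(z) 1_{φ(z)≥K} μ(dz). -/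
open MeasureTheory Filter Topology

/-- The leftcontinuous inverse (lower quantile function) `F_μ^←(t) = inf {y : F_μ(y) ≥ t}`. -/
noncomputable def quantileFun (μ : Measure ℝ) (t : ℝ) : ℝ :=
  sInf {y : ℝ | t ≤ cdfR μ y}

/-- `w_μ(t) = φ(F_μ^←(t)) 1_{[0, F_μ(0)]}(t)`. -/
noncomputable def wFun (φ : ℝ → ℝ) (μ : Measure ℝ) : ℝ → ℝ :=
  Set.indicator (Set.Icc 0 (cdfR μ 0)) fun t => φ (quantileFun μ t)

/-- The rightcontinuous inverse `w^→(y) = sup {s ∈ [0,1] : w(s) > y}` (with `sup ∅ = 0`). -/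
noncomputable def wInv (φ : ℝ → ℝ) (μ : Measure ℝ) (y : ℝ) : ℝ :=
  sSup {s : ℝ | s ∈ Set.Icc (0 : ℝ) 1 ∧ y < wFun φ μ s}

/-- The rightcontinuous inverse `φ^→(y) = sup {z ∈ (−∞,0] : φ(z) > y}` (with `sup ∅ = 0`)
of the nonincreasing restriction of `φ` to `(−∞,0]`. -/
noncomputable def phiInv (φ : ℝ → ℝ) (y : ℝ) : ℝ :=
  sSup {z : ℝ | z ≤ 0 ∧ y < φ z}

/-! Both bounds come from the identity `w^→(y) = μ {z ≤ 0 | y < φ z}` for `y ≥ 0`. Since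
`F_μ^←(s) ≤ x ↔ s ≤ F_μ(x)`, a point `s > 0` satisfies `y < w(s)` iff `s ≤ F_μ(0)` and `F_μ^←(s)`
lies in `{z ≤ 0 | y < φ z}`. That set is an initial segment of the line, and the measure of an
initial segment is the supremum of `F_μ` over it. The segment lies below its supremum `φ^→(y)`,
which is the first bound. Integrating the identity over `y > K` gives `∫_{(-∞,0]} (φ - K)⁺ dμ` by
the layer cake formula, and `(φ - K)⁺ ≤ φ 1_{φ ≥ K}`. -/

section InitialSegments

variable {α β : Type*}

lemma isLowerSet_setOf_le_and_lt_apply [Preorder α] [Preorder β] {f : α → β} {a : α}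
    (hf : AntitoneOn f (Set.Iic a)) (y : β) : IsLowerSet {z | z ≤ a ∧ y < f z} :=
  fun _ _ hle hz => ⟨hle.trans hz.1, hz.2.trans_le (hf (hle.trans hz.1) hz.1 hle)⟩

variable [TopologicalSpace α]

lemma antitoneOn_Iic_of_antitoneOn_Iio [LinearOrder α] [OrderTopology α]
    [DenselyOrdered α] [NoMinOrder α] [LinearOrder β] [TopologicalSpace β] [OrderClosedTopology β]
    {f : α → β} {a : α} (hf : AntitoneOn f (Set.Iio a))
    (ha : ContinuousWithinAt f (Set.Iio a) a) : AntitoneOn f (Set.Iic a) := by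
  rw [← Set.Iio_insert]
  have hclusterPt : ClusterPt a (𝓟 (Set.Iio a)) := mem_closure_iff_clusterPt.mp (by simp)
  exact hf.dual_right.insert_of_continuousWithinAt hclusterPt ha

lemma sInf_setOf_le_apply_le_iff [ConditionallyCompleteLinearOrder α] [OrderTopology α]
    [Preorder β] [TopologicalSpace β] [ClosedIciTopology β] {f : α → β} {t : β} {x : α}
    (hf : Monotone f) (hright : ∀ a, ContinuousWithinAt f (Set.Ici a) a)
    (hbdd : BddBelow {a | t ≤ f a}) (hne : {a | t ≤ f a}.Nonempty) :
    sInf {a | t ≤ f a} ≤ x ↔ t ≤ f x := by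
  refine ⟨fun hx => ?_, fun ht => csInf_le hbdd ht⟩
  have hclosure := mem_closure_iff_nhdsWithin_neBot.mp (csInf_mem_closure hne hbdd)
  have htendsto : Tendsto f (𝓝[{a | t ≤ f a}] sInf {a | t ≤ f a}) (𝓝 (f (sInf {a | t ≤ f a}))) :=
    (hright _).mono fun a ha => csInf_le hbdd ha
  have hattained : t ≤ f (sInf {a | t ≤ f a}) := ge_of_tendsto htendsto self_mem_nhdsWithin
  exact hattained.trans (hf hx)

lemma measure_eq_iSup_measure_Iic_of_isLowerSet [LinearOrder α] [ClosedIciTopology α]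
    [MeasurableSpace α] {s : Set α} (hs : IsLowerSet s) (hmeas : MeasurableSet s)
    (μ : Measure α) [μ.InnerRegular] : μ s = ⨆ x ∈ s, μ (Set.Iic x) := by
  refine le_antisymm ?_ (iSup₂_le fun x hx => measure_mono fun z hz => hs hz hx)
  rw [hmeas.measure_eq_iSup_isCompact μ]
  refine iSup_le fun C => iSup₂_le fun hCs hC => ?_
  rcases C.eq_empty_or_nonempty with rfl | hne
  · simp only [measure_empty, zero_le]
  · obtain ⟨m, hmC, hm⟩ := hC.exists_isGreatest hne
    exact (measure_mono fun z hz => hm hz).trans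
      (le_iSup₂ (f := fun x _ => μ (Set.Iic x)) m (hCs hmC))

end InitialSegments

section LayerCake

variable {Ω : Type*} [MeasurableSpace Ω] {μ : Measure Ω} {f : Ω → ℝ}

lemma lintegral_ofReal_sub_eq_setLIntegral_meas_lt (hf : AEMeasurable f μ) (K : ℝ) :
    ∫⁻ z, ENNReal.ofReal (f z - K) ∂μ = ∫⁻ y in Set.Ioi K, μ {z | y < f z} := by
  have hshift := (measurePreserving_add_right volume K).setLIntegral_comp_preimage_emb
    (MeasurableEquiv.addRight K).measurableEmbedding (fun y => μ {z | y < f z}) (Set.Ioi K)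
  rw [Set.preimage_add_const_Ioi, sub_self] at hshift
  calc ∫⁻ z, ENNReal.ofReal (f z - K) ∂μ
      = ∫⁻ z, ENNReal.ofReal (max (f z - K) 0) ∂μ := by
        simp only [ENNReal.ofReal_max, ENNReal.ofReal_zero, zero_le, max_eq_left]
    _ = ∫⁻ t in Set.Ioi 0, μ {z | t < max (f z - K) 0} :=
        lintegral_eq_lintegral_meas_lt μ (ae_of_all _ fun _ => le_max_right _ _)
          ((hf.sub_const K).max aemeasurable_const)
    _ = ∫⁻ t in Set.Ioi 0, μ {z | t + K < f z} := by
        refine setLIntegral_congr_fun measurableSet_Ioi fun t (ht : 0 < t) => ?_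
        simp only [lt_max_iff, lt_sub_iff_add_lt, ht.not_gt, or_false]
    _ = ∫⁻ y in Set.Ioi K, μ {z | y < f z} := hshift

lemma setIntegral_Ioi_measureReal_lt [IsFiniteMeasure μ] (hf : AEMeasurable f μ) (K : ℝ) :
    ∫ y in Set.Ioi K, μ.real {z | y < f z} = ∫ z, max (f z - K) 0 ∂μ := by
  have hanti : Antitone fun y => μ {z | y < f z} :=
    fun _ _ hab => measure_mono fun _ hz => hab.trans_lt hz
  simp only [measureReal_def]
  rw [integral_toReal hanti.measurable.aemeasurable (ae_of_all _ fun _ => measure_lt_top _ _),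
    ← lintegral_ofReal_sub_eq_setLIntegral_meas_lt hf,
    integral_eq_lintegral_of_nonneg_ae (ae_of_all _ fun z => le_max_right (f z - K) 0)
      ((hf.sub_const K).max aemeasurable_const).aestronglyMeasurable]
  simp only [ENNReal.ofReal_max, ENNReal.ofReal_zero, zero_le, max_eq_left]

/- Both integrals may diverge and then equal `0` by convention. Since the integrands differ by at
most `K`, they are integrable together, so the right side cannot collapse to `0` alone. -/
lemma integral_max_sub_zero_le_integral_indicator [IsFiniteMeasure μ] (hf : AEMeasurable f μ)
    {K : ℝ} (hK : 0 ≤ K) :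
    ∫ z, max (f z - K) 0 ∂μ ≤ ∫ z, Set.indicator {z | K ≤ f z} f z ∂μ := by
  have hnonneg : ∀ z, 0 ≤ Set.indicator {z | K ≤ f z} f z :=
    Set.indicator_nonneg fun z hz => hK.trans hz
  have hlower : ∀ z, max (f z - K) 0 ≤ Set.indicator {z | K ≤ f z} f z := fun z =>
    max_le (Set.le_indicator_apply (fun _ => by linarith)
      fun hz => sub_nonpos.mpr (not_le.mp hz).le) (hnonneg z)
  have hupper : ∀ z, Set.indicator {z | K ≤ f z} f z ≤ max (f z - K) 0 + K := fun z =>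
    Set.indicator_apply_le' (fun _ => by linarith [le_max_left (f z - K) 0])
      fun _ => by positivity
  by_cases hint : Integrable (fun z => max (f z - K) 0) μ
  · have hmeas : AEStronglyMeasurable (Set.indicator {z | K ≤ f z} f) μ :=
      hf.aestronglyMeasurable.indicator₀ (nullMeasurableSet_le aemeasurable_const hf)
    refine integral_mono hint ((hint.add (integrable_const K)).mono' hmeas ?_) hlower
    exact ae_of_all _ fun z => (Real.norm_of_nonneg (hnonneg z)).trans_le (hupper z)
  · rw [integral_undef hint]
    exact integral_nonneg hnonneg

end LayerCake

section InverseOfW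

variable {φ : ℝ → ℝ} {μ : Measure ℝ} {s t x y K : ℝ}

lemma lt_wFun_iff (hy : 0 ≤ y) :
    y < wFun φ μ s ↔ s ∈ Set.Icc 0 (cdfR μ 0) ∧ y < φ (quantileFun μ s) := by
  rw [wFun, Set.indicator_apply]
  split_ifs with hs
  · simp only [hs, true_and]
  · simp only [hs, hy.not_gt, false_and]

variable [IsProbabilityMeasure μ]

lemma cdfR_eq_cdf : cdfR μ = ProbabilityTheory.cdf μ :=
  funext fun x => (ProbabilityTheory.cdf_eq_real μ x).symm

lemma bddBelow_setOf_le_cdfR (ht : 0 < t) : BddBelow {x | t ≤ cdfR μ x} := by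
  obtain ⟨b, hb⟩ := ((ProbabilityTheory.tendsto_cdf_atBot μ).eventually_lt_const ht).exists
  rw [cdfR_eq_cdf]
  exact ⟨b, fun x hx =>
    ((ProbabilityTheory.monotone_cdf μ).reflect_lt (hb.trans_le hx)).le⟩

lemma quantileFun_le_iff (ht : 0 < t) (hne : {x | t ≤ cdfR μ x}.Nonempty) :
    quantileFun μ t ≤ x ↔ t ≤ cdfR μ x := by
  refine sInf_setOf_le_apply_le_iff ?_ ?_ (bddBelow_setOf_le_cdfR ht) hne
  · rw [cdfR_eq_cdf]
    exact ProbabilityTheory.monotone_cdf μ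
  · rw [cdfR_eq_cdf]
    exact (ProbabilityTheory.cdf μ).right_continuous

lemma wInv_le_measureReal (hφ : AntitoneOn φ (Set.Iic 0)) (hy : 0 ≤ y) :
    wInv φ μ y ≤ μ.real {z | z ≤ 0 ∧ y < φ z} := by
  refine Real.sSup_le ?_ measureReal_nonneg
  rintro s ⟨-, hw⟩
  obtain ⟨⟨hs0, hs⟩, hyφ⟩ := (lt_wFun_iff hy).mp hw
  rcases hs0.eq_or_lt with rfl | hspos
  · exact measureReal_nonneg
  have hgalois : ∀ x, quantileFun μ s ≤ x ↔ s ≤ cdfR μ x :=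
    fun x => quantileFun_le_iff hspos ⟨0, hs⟩
  have hsub : Set.Iic (quantileFun μ s) ⊆ {z | z ≤ 0 ∧ y < φ z} :=
    fun z hz => isLowerSet_setOf_le_and_lt_apply hφ y hz ⟨(hgalois 0).mpr hs, hyφ⟩
  exact ((hgalois _).mp le_rfl).trans (measureReal_mono hsub)

lemma cdfR_le_wInv (hφ : AntitoneOn φ (Set.Iic 0)) (hx : x ≤ 0) (hyx : y < φ x) :
    cdfR μ x ≤ wInv φ μ y := by
  have hF0 : 0 ≤ cdfR μ x := ENNReal.toReal_nonneg
  rcases hF0.eq_or_lt with hzero | hpos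
  · rw [← hzero]
    exact Real.sSup_nonneg fun s hs => hs.1.1
  have hquantile : quantileFun μ (cdfR μ x) ≤ x :=
    (quantileFun_le_iff hpos ⟨x, le_refl (cdfR μ x)⟩).mpr le_rfl
  have hmem : cdfR μ x ∈ Set.Icc 0 (cdfR μ 0) :=
    ⟨hF0, measureReal_mono (Set.Iic_subset_Iic.mpr hx)⟩
  have hw : y < wFun φ μ (cdfR μ x) := by
    rw [wFun, Set.indicator_of_mem hmem]
    exact (isLowerSet_setOf_le_and_lt_apply hφ y hquantile ⟨hx, hyx⟩).2
  exact le_csSup ⟨1, fun s hs => hs.1.2⟩ ⟨⟨hF0, measureReal_le_one⟩, hw⟩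

lemma wInv_eq_measureReal (hφ : AntitoneOn φ (Set.Iic 0)) (hy : 0 ≤ y) :
    wInv φ μ y = μ.real {z | z ≤ 0 ∧ y < φ z} := by
  refine (wInv_le_measureReal hφ hy).antisymm ?_
  have hlower := isLowerSet_setOf_le_and_lt_apply hφ y
  rw [measureReal_def,
    measure_eq_iSup_measure_Iic_of_isLowerSet hlower hlower.ordConnected.measurableSet]
  refine ENNReal.toReal_le_of_le_ofReal (Real.sSup_nonneg fun s hs => hs.1.1)
    (iSup₂_le fun x hx => ?_)
  rw [← ofReal_measureReal]
  exact ENNReal.ofReal_le_ofReal (cdfR_le_wInv hφ hx.1 hx.2)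

lemma wInv_le_cdfR_phiInv (hφ : AntitoneOn φ (Set.Iic 0)) (hy : 0 ≤ y) :
    wInv φ μ y ≤ cdfR μ (phiInv φ y) :=
  (wInv_le_measureReal hφ hy).trans
    (measureReal_mono fun _ hz => le_csSup ⟨0, fun _ h => h.1⟩ hz)

lemma setIntegral_Ioi_wInv (hφ : AntitoneOn φ (Set.Iic 0)) (hK : 0 ≤ K) :
    ∫ y in Set.Ioi K, wInv φ μ y = ∫ z in Set.Iic 0, max (φ z - K) 0 ∂μ := by
  rw [← setIntegral_Ioi_measureReal_lt (aemeasurable_restrict_of_antitoneOn measurableSet_Iic hφ)]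
  refine setIntegral_congr_fun measurableSet_Ioi fun y (hy : K < y) => ?_
  simp only [wInv_eq_measureReal hφ (hK.trans hy.le), measureReal_restrict_apply' measurableSet_Iic,
    Set.inter_comm _ (Set.Iic (0 : ℝ))]
  rfl

end InverseOfW

theorem wInv_le_and_tail_integral_bound_general {φ : ℝ → ℝ} (hφ : AntitoneOn φ (Set.Iic 0))
    (μ : Measure ℝ) [IsProbabilityMeasure μ] :
    (∀ y : ℝ, 0 ≤ y → wInv φ μ y ≤ cdfR μ (phiInv φ y)) ∧
    ∀ K : ℝ, 0 ≤ K →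
      (∫ y in Set.Ioi K, wInv φ μ y) ≤
        ∫ z, Set.indicator {z' : ℝ | z' ≤ 0 ∧ K ≤ φ z'} φ z ∂μ := by
  refine ⟨fun y hy => wInv_le_cdfR_phiInv hφ hy, fun K hK => ?_⟩
  calc ∫ y in Set.Ioi K, wInv φ μ y
      = ∫ z in Set.Iic 0, max (φ z - K) 0 ∂μ := setIntegral_Ioi_wInv hφ hK
    _ ≤ ∫ z in Set.Iic 0, Set.indicator {z' | K ≤ φ z'} φ z ∂μ :=
        integral_max_sub_zero_le_integral_indicator
          (aemeasurable_restrict_of_antitoneOn measurableSet_Iic hφ) hK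
    _ = ∫ z, Set.indicator {z' | z' ≤ 0 ∧ K ≤ φ z'} φ z ∂μ := by
        rw [← integral_indicator measurableSet_Iic, Set.indicator_indicator]
        rfl

/-- **Tail bound for the inverse of `w`** (Step 2 of the proof of Theorem 3.1):
`w^→(y) ≤ F_μ(φ^→(y))` for all `y > 0`, and
`∫_K^∞ w^→(y) dy ≤ ∫_{(−∞,0]} φ 1_{φ≥K} dμ` for every `K > 0`. -/
theorem wInv_le_and_tail_integral_bound
    (φ : ℝ → ℝ) (hφc : Continuous φ) (hφ1 : ∀ y : ℝ, 1 ≤ φ y)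
    (hφdec : AntitoneOn φ (Set.Iio 0)) (hφinc : MonotoneOn φ (Set.Ioi 0))
    (μ : Measure ℝ) [IsProbabilityMeasure μ] :
    (∀ y : ℝ, 0 < y → wInv φ μ y ≤ cdfR μ (phiInv φ y)) ∧
    ∀ K : ℝ, 0 < K →
      (∫ y in Set.Ioi K, wInv φ μ y) ≤
        ∫ z, Set.indicator {z' : ℝ | z' ≤ 0 ∧ K ≤ φ z'} φ z ∂μ := by
  have hφ : AntitoneOn φ (Set.Iic 0) :=
    antitoneOn_Iic_of_antitoneOn_Iio hφdec hφc.continuousWithinAt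
  obtain ⟨hpointwise, htail⟩ := wInv_le_and_tail_integral_bound_general hφ μ
  exact ⟨fun y hy => hpointwise y hy.le, fun K hK => htail K hK.le⟩
end
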